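/- In the affine rock–paper–scissors chain with parameter α > −2, almost surely M_n = X_n Y_n Z_n converges to a limit M ∈ [0, 1/27), the law of M gives positive probability to every nonempty open subinterval of (0, 1/27), the sequence (X_n, Y_n, Z_n) almost surely does not converge, and almost surely the set of cluster points (limit points) of (X_n, Y_n, Z_n) is exactly {(x,y,z) ∈ Δ² : x y z = M}. -/

import Mathlib

open MeasureTheory ProbabilityTheory Filter Set Topology

noncomputable section

/-- `γ_n = γ₀ + (4+α) n`. -/
def affGamma (γ₀ α : ℝ) (n : ℕ) : ℝ := γ₀ + (4 + α) * n

/-- The increments to the (unnormalised) attachment weights of the three types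
for each of the six possible transitions in the affine model. -/
def affIncr (α : ℝ) : Fin 6 → ℝ × ℝ × ℝ
  | 0 => (4 + α, 0, 0)
  | 1 => (0, 4 + α, 0)
  | 2 => (0, 0, 4 + α)
  | 3 => (1, 3 + α, 0)
  | 4 => (0, 1, 3 + α)
  | 5 => (3 + α, 0, 1)

/-- The conditional probability of each of the six possible transitions,
as a function of the current state `(x, y, z)`. -/
def affProb (i : Fin 6) (x y z : ℝ) : ℝ :=
  match i with
  | 0 => x ^ 2
  | 1 => y ^ 2
  | 2 => z ^ 2
  | 3 => 2 * x * y
  | 4 => 2 * y * z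
  | 5 => 2 * z * x

/-- The affine rock–paper–scissors preferential attachment chain with parameter `α`. -/
structure AffRPSChain {Ω : Type*} [MeasurableSpace Ω] (μ : Measure Ω) (α γ₀ : ℝ) where
  F : Filtration ℕ ‹MeasurableSpace Ω›
  X : ℕ → Ω → ℝ
  Y : ℕ → Ω → ℝ
  Z : ℕ → Ω → ℝ
  adapted_X : Adapted F X
  adapted_Y : Adapted F Y
  adapted_Z : Adapted F Z
  nonneg_X : ∀ n ω, 0 ≤ X n ω
  nonneg_Y : ∀ n ω, 0 ≤ Y n ω
  nonneg_Z : ∀ n ω, 0 ≤ Z n ω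
  sum_eq_one : ∀ n ω, X n ω + Y n ω + Z n ω = 1
  init_X_pos : ∀ ω, 0 < X 0 ω
  init_Y_pos : ∀ ω, 0 < Y 0 ω
  init_Z_pos : ∀ ω, 0 < Z 0 ω
  init_X_const : ∀ ω ω', X 0 ω = X 0 ω'
  init_Y_const : ∀ ω ω', Y 0 ω = Y 0 ω'
  init_Z_const : ∀ ω ω', Z 0 ω = Z 0 ω'
  step : ∀ (n : ℕ) (i : Fin 6),
    μ[Set.indicator
        {ω | X (n+1) ω = (affGamma γ₀ α n * X n ω + (affIncr α i).1) / affGamma γ₀ α (n+1) ∧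
             Y (n+1) ω = (affGamma γ₀ α n * Y n ω + (affIncr α i).2.1) / affGamma γ₀ α (n+1) ∧
             Z (n+1) ω = (affGamma γ₀ α n * Z n ω + (affIncr α i).2.2) / affGamma γ₀ α (n+1)}
        (fun _ => (1 : ℝ)) | F n]
      =ᵐ[μ] fun ω => affProb i (X n ω) (Y n ω) (Z n ω)

/-!
In mean, `M_n` decreases by a factor `1 - O(1 / γ_n²)` in one step, so it is a nonnegative
supermartingale and converges to a limit `M`. The sum of the terms
`C / (γ_n x) - log x` over the three coordinates `x` is a nonnegative supermartingale too, so it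
stays bounded; hence no type dies out and `M > 0`.

Let `D` be the deficit `1 / 27 - M` of the limit and `D_n` that of `M_n`. Given `𝔉_n`, the mean of
`D` is at least `D_n + e M_n / γ_n`, and its second moment is at most
`D_n² + C D_n / γ_n + C / γ_n²`. As long as `M_n` is bounded below, the second moment is thus
comparable to the square of the mean, so the conditional probability of `D > 0` stays bounded
below, and Lévy's upward theorem gives `D > 0` almost surely. Moreover `M` concentrates near `M_n`
when `n` is large; since suitable words in the transitions lead with positive probability, at a
late time, near any given point of the simplex, `M` hits every interval.

Around the barycentre, the angle of the chain has steps of order `1 / γ_n`, a mean drift bounded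
below by a constant times `1 / γ_n`, which is not summable, and a martingale part which converges.
So the chain winds around the barycentre infinitely often with steps tending to `0`, and it
accumulates at every angle. Each ray from the barycentre meets the level set of `M` in a single
point, so the cluster points fill the level set.
-/

namespace RPS

/-! ### Conditional expectations and martingales -/

section Probability

variable {Ω : Type*} {m mΩ : MeasurableSpace Ω} {μ : Measure Ω} [IsFiniteMeasure μ]

theorem ae_exists_mem_of_sum_condExp_eq_one {ι : Type*} [Fintype ι] (hm : m ≤ mΩ)
    {E : ι → Set Ω} {p : ι → Ω → ℝ} (hE : ∀ i, MeasurableSet (E i))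
    (hdisj : Pairwise (Function.onFun Disjoint E))
    (hp : ∀ i, μ[(E i).indicator (fun _ => (1 : ℝ)) | m] =ᵐ[μ] p i)
    (hsum : ∀ᵐ ω ∂μ, ∑ i, p i ω = 1) : ∀ᵐ ω ∂μ, ∃ i, ω ∈ E i := by
  have hmeas (i) : μ.real (E i) = ∫ ω, p i ω ∂μ := by
    rw [← integral_congr_ae (hp i), integral_condExp hm, integral_indicator_const _ (hE i)]
    simp
  have hunion : μ.real (⋃ i, E i) = μ.real univ := by
    rw [measureReal_iUnion_fintype hdisj hE, Finset.sum_congr rfl fun i _ => hmeas i,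
      ← integral_finsetSum _ fun i _ => integrable_condExp.congr (hp i), integral_congr_ae hsum]
    simp
  have hcompl : μ (⋃ i, E i)ᶜ = 0 := by
    rw [← measureReal_eq_zero_iff, measureReal_compl (MeasurableSet.iUnion hE), hunion, sub_self]
  filter_upwards [compl_mem_ae_iff.mpr hcompl] with ω hω
  simpa using hω

theorem condExp_eq_sum_of_eq_on_partition {ι : Type*} [Fintype ι] (hm : m ≤ mΩ)
    {E : ι → Set Ω} {p f : ι → Ω → ℝ} {A : Ω → ℝ} {K : ℝ} (hE : ∀ i, MeasurableSet (E i))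
    (hdisj : Pairwise (Function.onFun Disjoint E))
    (hp : ∀ i, μ[(E i).indicator (fun _ => (1 : ℝ)) | m] =ᵐ[μ] p i)
    (hsum : ∀ᵐ ω ∂μ, ∑ i, p i ω = 1) (hf : ∀ i, StronglyMeasurable[m] (f i))
    (hK : ∀ i, ∀ᵐ ω ∂μ, |f i ω| ≤ K) (hA : ∀ i, ∀ ω ∈ E i, A ω = f i ω) :
    μ[A | m] =ᵐ[μ] fun ω => ∑ i, p i ω * f i ω := by
  have hind (i) : Integrable ((E i).indicator (fun _ => (1 : ℝ))) μ :=
    (integrable_const 1).indicator (hE i)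
  have hmulInt (i) : Integrable (f i * (E i).indicator (fun _ => (1 : ℝ))) μ :=
    (hind i).bdd_mul ((hf i).mono hm).aestronglyMeasurable (hK i)
  have hdecomp : A =ᵐ[μ] ∑ i, f i * (E i).indicator (fun _ => (1 : ℝ)) := by
    filter_upwards [ae_exists_mem_of_sum_condExp_eq_one hm hE hdisj hp hsum] with ω ⟨i, hi⟩
    rw [Finset.sum_apply, Finset.sum_eq_single i]
    · simp [hi, hA i ω hi]
    · intro j _ hj
      simp [disjoint_left.1 (hdisj hj.symm) hi]
    · simp
  refine (condExp_congr_ae hdecomp).trans ((condExp_finsetSum (fun i _ => hmulInt i) _).trans ?_)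
  have hpull (i) := condExp_stronglyMeasurable_mul_of_bound hm (hf i) (hind i) K (hK i)
  filter_upwards [ae_all_iff.2 hpull, ae_all_iff.2 hp] with ω hω hpω
  rw [Finset.sum_apply]
  refine Finset.sum_congr rfl fun i _ => ?_
  rw [hω i, Pi.mul_apply, hpω i, mul_comm]

theorem measure_inter_pos_of_condExp_indicator_pos {A E : Set Ω}
    (hA : MeasurableSet[m] A) (hE : MeasurableSet E) (hμA : 0 < μ A)
    (hpos : ∀ᵐ ω ∂μ, 0 < μ[E.indicator (fun _ => (1 : ℝ)) | m] ω) : 0 < μ (A ∩ E) := by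
  refine pos_iff_ne_zero.mpr fun hAE => hμA.ne' ?_
  have hzero : A.indicator (E.indicator fun _ => (1 : ℝ)) =ᵐ[μ] 0 := by
    rw [indicator_indicator]
    exact indicator_meas_zero hAE
  have hcond : A.indicator (μ[E.indicator (fun _ => (1 : ℝ)) | m]) =ᵐ[μ] 0 :=
    (condExp_indicator ((integrable_const 1).indicator hE) hA).symm.trans
      ((condExp_congr_ae hzero).trans (.of_eq condExp_zero))
  rw [measure_eq_zero_iff_ae_notMem]
  filter_upwards [hcond, hpos] with ω hω hω_pos hωA
  rw [indicator_of_mem hωA] at hω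
  exact hω_pos.ne' hω

theorem two_mul_mul_condExp_sub_le_condExp_indicator_pos (hm : m ≤ mΩ) {D l : Ω → ℝ} {C : ℝ}
    (hDm : Measurable D) (hD : ∀ᵐ ω ∂μ, 0 ≤ D ω) (hDi : Integrable D μ)
    (hD2i : Integrable (fun ω => D ω ^ 2) μ) (hl : StronglyMeasurable[m] l)
    (hlC : ∀ ω, ‖l ω‖ ≤ C) :
    ∀ᵐ ω ∂μ, 2 * (l ω * μ[D | m] ω) - l ω ^ 2 * μ[fun ω => D ω ^ 2 | m] ω ≤
      μ[{ω | 0 < D ω}.indicator (fun _ => (1 : ℝ)) | m] ω := by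
  have hl2C (ω) : ‖(l ^ 2) ω‖ ≤ C ^ 2 := by
    rw [Pi.pow_apply, norm_pow]
    gcongr
    exact hlC ω
  have hi1 : Integrable (l * D) μ :=
    hDi.bdd_mul (hl.mono hm).aestronglyMeasurable (.of_forall hlC)
  have hi2 : Integrable (l ^ 2 * fun ω => D ω ^ 2) μ :=
    hD2i.bdd_mul ((hl.pow 2).mono hm).aestronglyMeasurable (.of_forall hl2C)
  have hlower : (2 : ℝ) • (l * D) - l ^ 2 * (fun ω => D ω ^ 2) ≤ᵐ[μ]
      {ω | 0 < D ω}.indicator (fun _ => (1 : ℝ)) := by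
    filter_upwards [hD] with ω hω
    simp only [Pi.sub_apply, Pi.smul_apply, Pi.mul_apply, Pi.pow_apply, smul_eq_mul]
    rcases hω.eq_or_lt with h0 | h0
    · simp [← h0]
    · rw [indicator_of_mem (show ω ∈ {ω | 0 < D ω} from h0)]
      nlinarith [sq_nonneg (1 - l ω * D ω)]
  have hGi : Integrable ({ω | 0 < D ω}.indicator (fun _ => (1 : ℝ))) μ :=
    (integrable_const 1).indicator (measurableSet_lt measurable_const hDm)
  filter_upwards [condExp_mono (m := m) ((hi1.smul (2 : ℝ)).sub hi2) hGi hlower,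
    condExp_sub (m := m) (hi1.smul (2 : ℝ)) hi2, condExp_smul (m := m) (μ := μ) (2 : ℝ) (l * D),
    condExp_mul_of_stronglyMeasurable_left hl hi1 hDi,
    condExp_mul_of_stronglyMeasurable_left (hl.pow 2) hi2 hD2i] with ω hmono hsub hsmul h1 h2
  rwa [hsub, Pi.sub_apply, hsmul, Pi.smul_apply, h1, h2, Pi.mul_apply, Pi.mul_apply, Pi.pow_apply,
    smul_eq_mul] at hmono

-- The indicator of `{0 < D}` dominates `2 l D - l² D²` for every `l`; take `l = c / (K h)`.
theorem sq_div_le_condExp_indicator_pos (hm : m ≤ mΩ) {D h : Ω → ℝ} {c K ε : ℝ}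
    (hDm : Measurable D) (hD : ∀ᵐ ω ∂μ, 0 ≤ D ω) (hDi : Integrable D μ)
    (hD2i : Integrable (fun ω => D ω ^ 2) μ) (hh : StronglyMeasurable[m] h) (hε : 0 < ε)
    (hεh : ∀ ω, ε ≤ h ω) (hc : 0 ≤ c) (hK : 0 < K) :
    ∀ᵐ ω ∂μ, c * h ω ≤ μ[D | m] ω → μ[fun ω => D ω ^ 2 | m] ω ≤ K * h ω ^ 2 →
      c ^ 2 / K ≤ μ[{ω | 0 < D ω}.indicator (fun _ => (1 : ℝ)) | m] ω := by
  have hpos (ω) : 0 < h ω := hε.trans_le (hεh ω)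
  set l : Ω → ℝ := fun ω => c / (K * h ω)
  have hl0 (ω) : 0 ≤ l ω := div_nonneg hc (mul_pos hK (hpos ω)).le
  have hlC (ω) : ‖l ω‖ ≤ c / (K * ε) := by
    rw [Real.norm_of_nonneg (hl0 ω)]
    exact div_le_div_of_nonneg_left hc (by positivity) (by gcongr; exact hεh ω)
  filter_upwards [two_mul_mul_condExp_sub_le_condExp_indicator_pos hm hDm hD hDi hD2i
    (stronglyMeasurable_const.div (hh.const_mul K)) hlC] with ω hω hmean hsq
  have hlω : 0 ≤ l ω := hl0 ω
  have hlh : l ω * (K * h ω) = c := div_mul_cancel₀ _ (mul_pos hK (hpos ω)).ne'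
  calc c ^ 2 / K = 2 * (l ω * (c * h ω)) - l ω ^ 2 * (K * h ω ^ 2) := by
        rw [← hlh]; field_simp; ring
    _ ≤ 2 * (l ω * μ[D | m] ω) - l ω ^ 2 * μ[fun ω => D ω ^ 2 | m] ω := by gcongr
    _ ≤ _ := hω

theorem setIntegral_sub_sq_le_of_condExp_le (hm : m ≤ mΩ) {A : Set Ω} {D : Ω → ℝ} {d v : ℝ}
    (hA : MeasurableSet[m] A) (hDi : Integrable D μ) (hD2i : Integrable (fun ω => D ω ^ 2) μ)
    (hd : 0 ≤ d) (hmean : ∀ᵐ ω ∂μ, ω ∈ A → d ≤ μ[D | m] ω)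
    (hsq : ∀ᵐ ω ∂μ, ω ∈ A → μ[fun ω => D ω ^ 2 | m] ω ≤ d ^ 2 + v) :
    ∫ ω in A, (D ω - d) ^ 2 ∂μ ≤ v * μ.real A := by
  have hconst (a : ℝ) : a * μ.real A = ∫ _ω in A, a ∂μ := by
    rw [setIntegral_const, smul_eq_mul, mul_comm]
  have hD1 : d * μ.real A ≤ ∫ ω in A, D ω ∂μ := by
    rw [← setIntegral_condExp hm hDi hA, hconst]
    exact setIntegral_mono_on_ae (integrable_const _).integrableOn integrable_condExp.integrableOn
      (hm _ hA) hmean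
  have hD2 : ∫ ω in A, D ω ^ 2 ∂μ ≤ (d ^ 2 + v) * μ.real A := by
    rw [← setIntegral_condExp hm hD2i hA, hconst]
    exact setIntegral_mono_on_ae integrable_condExp.integrableOn (integrable_const _).integrableOn
      (hm _ hA) hsq
  have hlin : Integrable (fun ω => 2 * d * D ω) μ := hDi.const_mul _
  have hquad : Integrable (fun ω => D ω ^ 2 - 2 * d * D ω) μ := hD2i.sub hlin
  calc ∫ ω in A, (D ω - d) ^ 2 ∂μ = ∫ ω in A, D ω ^ 2 - 2 * d * D ω + d ^ 2 ∂μ := by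
        congr! 2; ring
    _ = ∫ ω in A, D ω ^ 2 ∂μ - 2 * d * ∫ ω in A, D ω ∂μ + d ^ 2 * μ.real A := by
        rw [integral_add hquad.restrict (integrable_const _),
          integral_sub hD2i.restrict hlin.restrict, integral_const_mul, hconst]
    _ ≤ v * μ.real A := by nlinarith [mul_le_mul_of_nonneg_left hD1 hd]

theorem measure_inter_abs_sub_lt_pos (hm : m ≤ mΩ) {A : Set Ω} {D : Ω → ℝ} {d v δ : ℝ}
    (hA : MeasurableSet[m] A) (hμA : μ A ≠ 0) (hDi : Integrable D μ)
    (hD2i : Integrable (fun ω => D ω ^ 2) μ) (hd : 0 ≤ d)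
    (hmean : ∀ᵐ ω ∂μ, ω ∈ A → d ≤ μ[D | m] ω)
    (hsq : ∀ᵐ ω ∂μ, ω ∈ A → μ[fun ω => D ω ^ 2 | m] ω ≤ d ^ 2 + v) (hv : v < δ ^ 2)
    (hδ : 0 ≤ δ) : 0 < μ (A ∩ {ω | |D ω - d| < δ}) := by
  refine pos_iff_ne_zero.2 fun hnull => ?_
  have hi : Integrable (fun ω => (D ω - d) ^ 2) μ := by
    refine (((hD2i.sub (hDi.const_mul (2 * d))).add (integrable_const (d ^ 2)))).congr ?_
    exact .of_forall fun ω => by simp only [Pi.add_apply, Pi.sub_apply]; ring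
  have hlower : δ ^ 2 * μ.real A ≤ ∫ ω in A, (D ω - d) ^ 2 ∂μ := by
    rw [mul_comm, ← smul_eq_mul, ← setIntegral_const]
    refine setIntegral_mono_on_ae (integrable_const _).integrableOn hi.integrableOn (hm _ hA) ?_
    filter_upwards [compl_mem_ae_iff.2 hnull] with ω hω hωA
    rw [← sq_abs (D ω - d)]
    gcongr
    exact not_lt.1 fun h => hω ⟨hωA, h⟩
  have hpos : 0 < μ.real A := ENNReal.toReal_pos hμA (measure_ne_top _ _)
  exact (mul_lt_mul_of_pos_right hv hpos).not_ge
    (hlower.trans (setIntegral_sub_sq_le_of_condExp_le hm hA hDi hD2i hd hmean hsq))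

variable {F : Filtration ℕ mΩ} {f : ℕ → Ω → ℝ}

theorem ae_exists_tendsto_of_supermartingale_nonneg (hf : Supermartingale f F μ)
    (h0 : ∀ n, 0 ≤ᵐ[μ] f n) : ∀ᵐ ω ∂μ, ∃ l, Tendsto (fun n => f n ω) atTop (𝓝 l) := by
  have hb (n) : eLpNorm ((-f) n) 1 μ ≤ (Real.toNNReal (∫ ω, f 0 ω ∂μ) : NNReal) := by
    rw [Pi.neg_apply, eLpNorm_neg, eLpNorm_one_eq_lintegral_enorm,
      ← ofReal_integral_norm_eq_lintegral_enorm (hf.integrable n), ENNReal.ofReal]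
    refine ENNReal.coe_le_coe.2 (Real.toNNReal_le_toNNReal ?_)
    calc ∫ ω, ‖f n ω‖ ∂μ = ∫ ω, f n ω ∂μ :=
          integral_congr_ae ((h0 n).mono fun ω hω => Real.norm_of_nonneg hω)
      _ ≤ ∫ ω, f 0 ω ∂μ := by simpa using hf.setIntegral_le (Nat.zero_le n) MeasurableSet.univ
  filter_upwards [hf.neg.exists_ae_tendsto_of_bdd hb] with ω ⟨l, hl⟩
  exact ⟨-l, by simpa using hl.neg⟩

theorem condExp_limit_le_of_supermartingale (hf : Supermartingale f F μ) {C : ℝ}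
    (hb : ∀ k, ∀ᵐ ω ∂μ, |f k ω| ≤ C) {g : Ω → ℝ} (hg : Integrable g μ)
    (hl : ∀ᵐ ω ∂μ, Tendsto (fun k => f k ω) atTop (𝓝 (g ω))) (n : ℕ) :
    μ[g | F n] ≤ᵐ[μ] f n := by
  have hfm : StronglyMeasurable[F n] (f n) := hf.1 n
  refine ae_of_ae_trim (F.le n) (ae_le_of_forall_setIntegral_le
    (integrable_condExp.trim (F.le n) stronglyMeasurable_condExp)
    ((hf.integrable n).trim (F.le n) hfm) fun A hA _ => ?_)
  rw [← setIntegral_trim (F.le n) stronglyMeasurable_condExp hA, ← setIntegral_trim (F.le n) hfm hA,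
    setIntegral_condExp (F.le n) hg hA]
  have hlimInt : Tendsto (fun k => ∫ ω in A, f k ω ∂μ) atTop (𝓝 (∫ ω in A, g ω ∂μ)) :=
    tendsto_integral_of_dominated_convergence (fun _ => C)
      (fun k => (hf.integrable k).aestronglyMeasurable.restrict) (integrable_const C)
      (fun k => ae_restrict_of_ae (hb k)) (ae_restrict_of_ae hl)
  refine le_of_tendsto hlimInt ?_
  filter_upwards [eventually_ge_atTop n] with k hk using hf.setIntegral_le hk hA

theorem ae_mem_of_eventually_le_condExp_indicator {A : Set Ω} (hA : MeasurableSet[⨆ n, F n] A)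
    {ε : ℝ} (hε : 0 < ε) :
    ∀ᵐ ω ∂μ, (∀ᶠ n in atTop, ε ≤ μ[A.indicator (fun _ => (1 : ℝ)) | F n] ω) → ω ∈ A := by
  have hi : Integrable (A.indicator (fun _ => (1 : ℝ))) μ :=
    (integrable_const 1).indicator (iSup_le F.le _ hA)
  filter_upwards [hi.tendsto_ae_condExp (stronglyMeasurable_const.indicator hA)] with ω hlim hω
  by_contra hωA
  rw [indicator_of_notMem hωA] at hlim
  exact hε.not_ge (ge_of_tendsto hlim hω)

theorem condExp_add_sq_le (hm : m ≤ mΩ) {N A : Ω → ℝ} {K a : ℝ} (hN : StronglyMeasurable[m] N)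
    (hNK : ∀ᵐ ω ∂μ, |N ω| ≤ K) (hA : StronglyMeasurable A) (hAa : ∀ᵐ ω ∂μ, |A ω| ≤ a)
    (hA0 : μ[A | m] =ᵐ[μ] 0) :
    μ[fun ω => (N ω + A ω) ^ 2 | m] ≤ᵐ[μ] fun ω => N ω ^ 2 + a ^ 2 := by
  have hAi : Integrable A μ := .of_bound hA.aestronglyMeasurable a hAa
  have hNA : Integrable (N * A) μ := hAi.bdd_mul (hN.mono hm).aestronglyMeasurable hNK
  have hNi : Integrable N μ := .of_bound (hN.mono hm).aestronglyMeasurable K hNK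
  have hN2 : Integrable (fun ω => N ω ^ 2) μ :=
    (hNi.bdd_mul (hN.mono hm).aestronglyMeasurable hNK).congr (.of_forall fun ω => (sq _).symm)
  have hA2 : Integrable (fun ω => A ω ^ 2) μ :=
    (hAi.bdd_mul hA.aestronglyMeasurable hAa).congr (.of_forall fun ω => (sq _).symm)
  have hNa : Integrable (fun ω => N ω ^ 2 + a ^ 2) μ := hN2.add (integrable_const _)
  have hNA2 : Integrable ((2 : ℝ) • (N * A)) μ := hNA.smul 2
  have hsum : Integrable (fun ω => (N ω + A ω) ^ 2) μ :=
    ((hN2.add hNA2).add hA2).congr (.of_forall fun ω => by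
      simp only [Pi.add_apply, Pi.smul_apply, Pi.mul_apply, smul_eq_mul]; ring)
  have hle : (fun ω => (N ω + A ω) ^ 2) ≤ᵐ[μ]
      (fun ω => N ω ^ 2 + a ^ 2) + (2 : ℝ) • (N * A) := by
    filter_upwards [hAa] with ω hω
    have : A ω ^ 2 ≤ a ^ 2 := sq_le_sq.2 (hω.trans (le_abs_self _))
    simp only [Pi.add_apply, Pi.smul_apply, Pi.mul_apply, smul_eq_mul]
    linarith
  have hself : μ[fun ω => N ω ^ 2 + a ^ 2 | m] = fun ω => N ω ^ 2 + a ^ 2 :=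
    condExp_of_stronglyMeasurable hm ((hN.pow 2).add stronglyMeasurable_const) hNa
  filter_upwards [condExp_mono (m := m) hsum (hNa.add hNA2) hle, condExp_add (m := m) hNa hNA2,
    condExp_smul (m := m) (μ := μ) (2 : ℝ) (N * A),
    condExp_mul_of_stronglyMeasurable_left hN hNA hAi, hA0] with ω hmono hadd hsmul hmul hzero
  rw [hadd, Pi.add_apply, hself, hsmul, Pi.smul_apply, hmul, Pi.mul_apply, hzero] at hmono
  simpa using hmono

section MartingaleDifferences

variable {A : ℕ → Ω → ℝ} {a : ℕ → ℝ}

theorem supermartingale_sq_add_tail (hA : ∀ k, StronglyMeasurable[F (k + 1)] (A k))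
    (hb : ∀ k, ∀ᵐ ω ∂μ, |A k ω| ≤ a k) (h0 : ∀ k, μ[A k | F k] =ᵐ[μ] 0)
    (ha : Summable fun k => a k ^ 2) (c : ℝ) :
    Supermartingale
      (fun n ω => (c + ∑ k ∈ Finset.range n, A k ω) ^ 2 + ∑' k, a (k + n) ^ 2) F μ := by
  set N : ℕ → Ω → ℝ := fun n ω => c + ∑ k ∈ Finset.range n, A k ω with hN
  set R : ℕ → ℝ := fun n => ∑' k, a (k + n) ^ 2
  have hR (n) : R n = a n ^ 2 + R (n + 1) := by
    have := ((summable_nat_add_iff n).2 ha).tsum_eq_zero_add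
    simpa only [R, zero_add, add_assoc, add_comm 1 n] using this
  have hNm (n) : StronglyMeasurable[F n] (N n) :=
    stronglyMeasurable_const.add (Finset.stronglyMeasurable_fun_sum _ fun k hk =>
      (hA k).mono (F.mono (Finset.mem_range.1 hk)))
  have hNb (n) : ∀ᵐ ω ∂μ, |N n ω| ≤ |c| + ∑ k ∈ Finset.range n, a k := by
    filter_upwards [ae_all_iff.2 hb] with ω hω
    refine (abs_add_le _ _).trans ?_
    gcongr
    exact (Finset.abs_sum_le_sum_abs _ _).trans (Finset.sum_le_sum fun k _ => hω k)
  have hN2 (n) : Integrable (fun ω => N n ω ^ 2) μ := by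
    refine .of_bound (((hNm n).mono (F.le _)).pow 2).aestronglyMeasurable
      ((|c| + ∑ k ∈ Finset.range n, a k) ^ 2) ?_
    filter_upwards [hNb n] with ω hω
    rw [norm_pow]
    exact pow_le_pow_left₀ (norm_nonneg _) hω 2
  refine supermartingale_nat (fun n => ((hNm n).pow 2).add stronglyMeasurable_const)
    (fun n => (hN2 n).add (integrable_const _)) fun n => ?_
  have hsucc : (fun ω => N (n + 1) ω ^ 2) = fun ω => (N n ω + A n ω) ^ 2 := by
    ext ω; simp only [hN, Finset.sum_range_succ, add_assoc]
  filter_upwards [condExp_add (m := F n) (hN2 (n + 1)) (integrable_const (μ := μ) (R (n + 1))),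
    condExp_add_sq_le (F.le n) (hNm n) (hNb n) ((hA n).mono (F.le _)) (hb n) (h0 n)]
    with ω hadd hle
  refine hadd.trans_le ?_
  rw [Pi.add_apply, condExp_const (F.le n), hsucc]
  linarith [hR n]

-- The partial sums `N` converge because the nonnegative supermartingales `N² + tail` and
-- `(1 + N)² + tail` do.
theorem ae_exists_tendsto_sum_of_condExp_eq_zero
    (hA : ∀ k, StronglyMeasurable[F (k + 1)] (A k))
    (hb : ∀ k, ∀ᵐ ω ∂μ, |A k ω| ≤ a k) (h0 : ∀ k, μ[A k | F k] =ᵐ[μ] 0)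
    (ha : Summable fun k => a k ^ 2) :
    ∀ᵐ ω ∂μ, ∃ l, Tendsto (fun n => ∑ k ∈ Finset.range n, A k ω) atTop (𝓝 l) := by
  have hconv (c : ℝ) := ae_exists_tendsto_of_supermartingale_nonneg
    (supermartingale_sq_add_tail hA hb h0 ha c)
    fun n => .of_forall fun ω => add_nonneg (sq_nonneg _) (tsum_nonneg fun k => sq_nonneg _)
  filter_upwards [hconv 0, hconv 1] with ω ⟨l₀, h₀⟩ ⟨l₁, h₁⟩
  refine ⟨(l₁ - l₀ - 1) / 2, (((h₁.sub h₀).sub_const 1).div_const 2).congr fun n => ?_⟩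
  ring

end MartingaleDifferences

end Probability

/-! ### Winding of sequences -/

section Winding

theorem eventually_exists_mem_Ico_of_tendsto_atTop {ψ : ℕ → ℝ}
    (hincr : Tendsto (fun n => ψ (n + 1) - ψ n) atTop (𝓝 0)) (hψ : Tendsto ψ atTop atTop)
    {ε : ℝ} (hε : 0 < ε) (N : ℕ) : ∀ᶠ t in atTop, ∃ n ≥ N, ψ n ∈ Ico t (t + ε) := by
  obtain ⟨N₁, hN₁⟩ := eventually_atTop.1 (hincr.eventually (gt_mem_nhds hε))
  filter_upwards [eventually_gt_atTop (ψ (max N N₁))] with t ht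
  obtain ⟨n₀, hn₀⟩ := eventually_atTop.1 (hψ.eventually_ge_atTop t)
  have hex : ∃ n, t ≤ ψ (max N N₁ + n) := ⟨n₀, hn₀ _ (by omega)⟩
  classical
  obtain ⟨k, hk⟩ : ∃ k, Nat.find hex = k + 1 :=
    Nat.exists_eq_succ_of_ne_zero fun h => ht.not_ge (by simpa [h] using Nat.find_spec hex)
  have hbefore : ψ (max N N₁ + k) < t := not_le.1 (Nat.find_min hex (by omega))
  have hstep := hN₁ (max N N₁ + k) (by omega)
  exact ⟨max N N₁ + (k + 1), by omega, hk ▸ Nat.find_spec hex, by rw [← add_assoc]; linarith⟩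

theorem mapClusterPt_angle_of_tendsto_atTop {ψ : ℕ → ℝ}
    (hincr : Tendsto (fun n => ψ (n + 1) - ψ n) atTop (𝓝 0)) (hψ : Tendsto ψ atTop atTop)
    (θ : Real.Angle) : MapClusterPt θ atTop fun n => (ψ n : Real.Angle) := by
  induction θ using Real.Angle.induction_on with | _ φ
  refine mapClusterPt_iff_frequently.2 fun s hs => frequently_atTop.2 fun N => ?_
  obtain ⟨ε, hε, hball⟩ :=
    Metric.mem_nhds_iff.1 (Real.Angle.continuous_coe.continuousAt.preimage_mem_nhds hs)
  have hlaps : Tendsto (fun m : ℕ => φ + m * (2 * Real.pi)) atTop atTop :=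
    tendsto_atTop_add_const_left _ _
      (tendsto_natCast_atTop_atTop.atTop_mul_const Real.two_pi_pos)
  obtain ⟨m, n, hn, hlo, hhi⟩ :=
    (hlaps.eventually (eventually_exists_mem_Ico_of_tendsto_atTop hincr hψ hε N)).exists
  have hmem : ψ n - m * (2 * Real.pi) ∈ Metric.ball φ ε := by
    rw [Metric.mem_ball, Real.dist_eq, abs_lt]
    constructor <;> linarith
  refine ⟨n, hn, ?_⟩
  have : ((ψ n : ℝ) : Real.Angle) = ((ψ n - m * (2 * Real.pi) : ℝ) : Real.Angle) := by
    rw [Real.Angle.angle_eq_iff_two_pi_dvd_sub]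
    exact ⟨m, by push_cast; ring⟩
  rw [this]
  exact hball hmem

theorem abs_arg_sub_im_le {z : ℂ} (hz : ‖z - 1‖ ≤ 1 / 2) : |z.arg - z.im| ≤ ‖z - 1‖ ^ 2 := by
  have hlog := Complex.norm_log_one_add_sub_self_le (z := z - 1) (by linarith)
  have him : (Complex.log (1 + (z - 1)) - (z - 1)).im = z.arg - z.im := by simp [Complex.log_im]
  have hinv : (1 - ‖z - 1‖)⁻¹ ≤ 2 := by
    rw [inv_le_comm₀ (by linarith) two_pos]; linarith
  calc |z.arg - z.im| ≤ ‖Complex.log (1 + (z - 1)) - (z - 1)‖ := him ▸ Complex.abs_im_le_norm _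
    _ ≤ ‖z - 1‖ ^ 2 * (1 - ‖z - 1‖)⁻¹ / 2 := hlog
    _ ≤ ‖z - 1‖ ^ 2 * 2 / 2 := by gcongr
    _ = ‖z - 1‖ ^ 2 := by ring

theorem arg_eq_arg_zero_add_sum {w : ℕ → ℂ} (hw : ∀ n, w n ≠ 0) (n : ℕ) :
    ((w n).arg : Real.Angle) =
      ((w 0).arg + ∑ k ∈ Finset.range n, (w (k + 1) / w k).arg : ℝ) := by
  induction n with
  | zero => simp
  | succ n ih =>
    rw [Finset.sum_range_succ, ← add_assoc, Real.Angle.coe_add, ← ih,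
      ← Complex.arg_mul_coe_angle (hw n) (div_ne_zero (hw (n + 1)) (hw n)),
      mul_div_cancel₀ _ (hw n)]

-- The increments of the argument differ from `im (w (n+1) / w n)` by a summable amount.
theorem mapClusterPt_arg_of_tendsto_sum_im {w : ℕ → ℂ} {ρ : ℕ → ℝ} (hw : ∀ n, w n ≠ 0)
    (hρ : ∀ n, ‖w (n + 1) / w n - 1‖ ≤ ρ n) (hρs : Summable fun n => ρ n ^ 2)
    (him : Tendsto (fun n => ∑ k ∈ Finset.range n, (w (k + 1) / w k).im) atTop atTop)
    (θ : Real.Angle) : MapClusterPt θ atTop fun n => ((w n).arg : Real.Angle) := by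
  have hρ0 : Tendsto ρ atTop (𝓝 0) := by
    have hsqrt := (Real.continuous_sqrt.tendsto 0).comp hρs.tendsto_atTop_zero
    rw [Real.sqrt_zero] at hsqrt
    exact hsqrt.congr fun n => Real.sqrt_sq ((norm_nonneg _).trans (hρ n))
  have hquot : Tendsto (fun n => w (n + 1) / w n) atTop (𝓝 1) :=
    tendsto_iff_norm_sub_tendsto_zero.2 (squeeze_zero (fun n => norm_nonneg _) hρ hρ0)
  have hdiff : Summable fun n => (w (n + 1) / w n).arg - (w (n + 1) / w n).im := by
    refine hρs.of_norm_bounded_eventually_nat ?_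
    filter_upwards [hρ0.eventually (ge_mem_nhds (show (0 : ℝ) < 1 / 2 by norm_num))] with n hn
    exact (abs_arg_sub_im_le ((hρ n).trans hn)).trans
      (pow_le_pow_left₀ (norm_nonneg _) (hρ n) 2)
  simp_rw [arg_eq_arg_zero_add_sum hw]
  refine mapClusterPt_angle_of_tendsto_atTop ?_ ?_ θ
  · have harg := (Complex.continuousAt_arg Complex.one_mem_slitPlane).tendsto.comp hquot
    rw [Complex.arg_one] at harg
    exact harg.congr fun n => by simp [Finset.sum_range_succ]
  · refine tendsto_atTop_add_const_left _ _ ((hdiff.hasSum.tendsto_sum_nat.add_atTop him).congr ?_)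
    intro n
    rw [← Finset.sum_add_distrib]
    simp

end Winding

/-! ### Geometry of the simplex and of the level sets -/

section Simplex

/-- A point `(x, y, z)` of the state space; its norm is the maximum norm. -/
abbrev State : Type := ℝ × ℝ × ℝ

/-- The simplex `Δ²`. -/
def simplex : Set State := {s | 0 ≤ s.1 ∧ 0 ≤ s.2.1 ∧ 0 ≤ s.2.2 ∧ s.1 + s.2.1 + s.2.2 = 1}

/-- The centre of the simplex, around which the chain winds. -/
def barycenter : State := (1 / 3, 1 / 3, 1 / 3)

/-- The product `x y z`, whose values along the chain are the `M_n`. -/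
def coordProd (s : State) : ℝ := s.1 * s.2.1 * s.2.2

/-- An isometric (up to scaling) complex coordinate on the plane of the simplex, centred at the
barycentre. -/
def toComplex (s : State) : ℂ := ⟨s.1 - (s.2.1 + s.2.2) / 2, √3 / 2 * (s.2.1 - s.2.2)⟩

/-- The squared modulus of `toComplex s`, as a polynomial. -/
def sqDev (s : State) : ℝ :=
  s.1 ^ 2 + s.2.1 ^ 2 + s.2.2 ^ 2 - s.1 * s.2.1 - s.2.1 * s.2.2 - s.2.2 * s.1

/-- The oriented area spanned by `s` and `t` as seen from the barycentre, up to a constant. -/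
def cross (s t : State) : ℝ :=
  s.1 * (t.2.1 - t.2.2) + s.2.1 * (t.2.2 - t.1) + s.2.2 * (t.1 - t.2.1)

/-- The polynomial governing the mean rotation of the chain about the barycentre, see
`transOp_cross`. -/
def angularDrift (s : State) : ℝ :=
  s.1 * (s.2.1 - s.2.2) ^ 2 + s.2.1 * (s.2.2 - s.1) ^ 2 + s.2.2 * (s.1 - s.2.1) ^ 2

variable {s t p q : State}

theorem simplex_subset_Icc : simplex ⊆ Icc 0 1 := by
  rintro s ⟨hx, hy, hz, hsum⟩
  refine ⟨⟨hx, hy, hz⟩, ?_, ?_, ?_⟩ <;> simp only [Prod.fst_one, Prod.snd_one] <;> linarith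

theorem isClosed_simplex : IsClosed simplex := by
  simp only [simplex, ofPred_and]
  exact (isClosed_le (by fun_prop) (by fun_prop)).inter <|
    (isClosed_le (by fun_prop) (by fun_prop)).inter <|
    (isClosed_le (by fun_prop) (by fun_prop)).inter <|
    isClosed_eq (by fun_prop) (by fun_prop)

theorem isCompact_simplex : IsCompact simplex :=
  isCompact_Icc.of_isClosed_subset isClosed_simplex simplex_subset_Icc

theorem continuous_coordProd : Continuous coordProd := by
  unfold coordProd; fun_prop

theorem continuous_toComplex : Continuous toComplex := by
  have : toComplex = fun s : State => ((s.1 - (s.2.1 + s.2.2) / 2 : ℝ) : ℂ) +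
      ((√3 / 2 * (s.2.1 - s.2.2) : ℝ) : ℂ) * Complex.I :=
    funext fun s => Complex.mk_eq_add_mul_I _ _
  rw [this]
  fun_prop

theorem abs_coord_sub_le (s t : State) : |t.1 - s.1| ≤ ‖t - s‖ ∧ |t.2.1 - s.2.1| ≤ ‖t - s‖ ∧
    |t.2.2 - s.2.2| ≤ ‖t - s‖ :=
  ⟨norm_fst_le (t - s), (norm_fst_le _).trans (norm_snd_le (t - s)),
    (norm_snd_le _).trans (norm_snd_le (t - s))⟩

theorem norm_sub_le_one (hs : s ∈ simplex) (ht : t ∈ simplex) : ‖t - s‖ ≤ 1 := by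
  obtain ⟨⟨hs₁, hs₂, hs₃⟩, hs₁', hs₂', hs₃'⟩ := simplex_subset_Icc hs
  obtain ⟨⟨ht₁, ht₂, ht₃⟩, ht₁', ht₂', ht₃'⟩ := simplex_subset_Icc ht
  simp only [Prod.fst_one, Prod.snd_one, Prod.fst_zero, Prod.snd_zero] at *
  simp only [Prod.norm_def, max_le_iff, Real.norm_eq_abs, abs_le, Prod.fst_sub, Prod.snd_sub]
  refine ⟨⟨?_, ?_⟩, ⟨?_, ?_⟩, ?_, ?_⟩ <;> linarith

theorem two_mul_sqDev (s : State) :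
    2 * sqDev s = (s.2.1 - s.2.2) ^ 2 + (s.2.2 - s.1) ^ 2 + (s.1 - s.2.1) ^ 2 := by
  unfold sqDev; ring

theorem sqDev_nonneg (s : State) : 0 ≤ sqDev s := by
  have : 0 ≤ 2 * sqDev s := by rw [two_mul_sqDev]; positivity
  linarith

theorem one_sub_coordProd (hs : s.1 + s.2.1 + s.2.2 = 1) :
    1 - 27 * coordProd s = sqDev s + 3 * angularDrift s := by
  have hz : s.2.2 = 1 - s.1 - s.2.1 := by linarith
  simp only [coordProd, sqDev, angularDrift, hz]
  ring

theorem coordProd_nonneg (hs : s ∈ simplex) : 0 ≤ coordProd s :=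
  mul_nonneg (mul_nonneg hs.1 hs.2.1) hs.2.2.1

theorem angularDrift_nonneg (hs : s ∈ simplex) : 0 ≤ angularDrift s := by
  obtain ⟨hx, hy, hz, -⟩ := hs
  unfold angularDrift
  positivity

theorem angularDrift_le (hs : s ∈ simplex) : angularDrift s ≤ 2 * sqDev s := by
  obtain ⟨-, hx, hy, hz⟩ := simplex_subset_Icc hs
  rw [two_mul_sqDev]
  exact add_le_add (add_le_add (mul_le_of_le_one_left (sq_nonneg _) hx)
    (mul_le_of_le_one_left (sq_nonneg _) hy)) (mul_le_of_le_one_left (sq_nonneg _) hz)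

theorem coordProd_mul_sqDev_le_angularDrift (hs : s ∈ simplex) :
    2 * coordProd s * sqDev s ≤ angularDrift s := by
  obtain ⟨⟨hx, hy, hz⟩, hx', hy', hz'⟩ := simplex_subset_Icc hs
  have hMx : coordProd s ≤ s.1 := by
    unfold coordProd
    exact (mul_le_of_le_one_right (mul_nonneg hx hy) hz').trans (mul_le_of_le_one_right hx hy')
  have hMy : coordProd s ≤ s.2.1 := by
    unfold coordProd
    exact (mul_le_of_le_one_right (mul_nonneg hx hy) hz').trans (mul_le_of_le_one_left hy hx')
  have hMz : coordProd s ≤ s.2.2 := by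
    unfold coordProd
    exact mul_le_of_le_one_left hz (mul_le_one₀ hx' hy hy')
  calc 2 * coordProd s * sqDev s = coordProd s * (2 * sqDev s) := by ring
    _ = coordProd s * (s.2.1 - s.2.2) ^ 2 + coordProd s * (s.2.2 - s.1) ^ 2
        + coordProd s * (s.1 - s.2.1) ^ 2 := by rw [two_mul_sqDev]; ring
    _ ≤ angularDrift s := by unfold angularDrift; gcongr

theorem sqDev_le_one_sub_coordProd (hs : s ∈ simplex) : sqDev s ≤ 1 - 27 * coordProd s := by
  have := angularDrift_nonneg hs
  rw [one_sub_coordProd hs.2.2.2]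
  linarith

theorem one_sub_coordProd_le_sqDev (hs : s ∈ simplex) : 1 - 27 * coordProd s ≤ 7 * sqDev s := by
  have := angularDrift_le hs
  rw [one_sub_coordProd hs.2.2.2]
  linarith

theorem coordProd_le (hs : s ∈ simplex) : coordProd s ≤ 1 / 27 := by
  have := (sqDev_nonneg s).trans (sqDev_le_one_sub_coordProd hs)
  linarith

theorem sqDev_pos (hs : s ∈ simplex) (h : coordProd s < 1 / 27) : 0 < sqDev s := by
  have := one_sub_coordProd_le_sqDev hs
  linarith

theorem angularDrift_le_one (hs : s ∈ simplex) : angularDrift s ≤ 1 := by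
  have := one_sub_coordProd hs.2.2.2
  have := sqDev_nonneg s
  have := coordProd_nonneg hs
  have := angularDrift_nonneg hs
  linarith

theorem abs_cross_le (hs : s ∈ simplex) (t : State) : |cross s t| ≤ 3 * ‖t - s‖ := by
  obtain ⟨⟨hx, hy, hz⟩, hx', hy', hz'⟩ := simplex_subset_Icc hs
  obtain ⟨ha, hb, he⟩ := abs_coord_sub_le s t
  simp only [Prod.fst_one, Prod.snd_one, Prod.fst_zero, Prod.snd_zero] at hx hy hz hx' hy' hz'
  have hmul {u v : ℝ} (hu : |u| ≤ ‖t - s‖) (hv : |v| ≤ 1) : |u * v| ≤ ‖t - s‖ := by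
    rw [abs_mul]
    exact (mul_le_of_le_one_right (abs_nonneg u) hv).trans hu
  have hcross : cross s t = (t.1 - s.1) * (s.2.2 - s.2.1) + (t.2.1 - s.2.1) * (s.1 - s.2.2)
      + (t.2.2 - s.2.2) * (s.2.1 - s.1) := by unfold cross; ring
  rw [hcross]
  linarith [abs_add_three ((t.1 - s.1) * (s.2.2 - s.2.1)) ((t.2.1 - s.2.1) * (s.1 - s.2.2))
      ((t.2.2 - s.2.2) * (s.2.1 - s.1)),
    hmul ha (abs_sub_le_of_nonneg_of_le hz hz' hy hy'),
    hmul hb (abs_sub_le_of_nonneg_of_le hx hx' hz hz'),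
    hmul he (abs_sub_le_of_nonneg_of_le hy hy' hx hx')]

theorem sq_linear_part_le {a b ε : ℝ} (hs : s ∈ simplex) (ha : |a| ≤ ε) (hb : |b| ≤ ε) :
    (a * (s.2.1 * (s.2.2 - s.1)) + b * (s.1 * (s.2.2 - s.2.1))) ^ 2 ≤ 4 * ε ^ 2 * sqDev s := by
  obtain ⟨⟨hx, hy, -⟩, hx', hy', -⟩ := simplex_subset_Icc hs
  have hmul {u v w : ℝ} (hu : |u| ≤ ε) (hv : 0 ≤ v) (hv' : v ≤ 1) :
      (u * (v * w)) ^ 2 ≤ ε ^ 2 * w ^ 2 := by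
    rw [mul_pow, mul_pow, ← sq_abs u]
    have : |u| ^ 2 ≤ ε ^ 2 := pow_le_pow_left₀ (abs_nonneg u) hu 2
    exact mul_le_mul this (mul_le_of_le_one_left (sq_nonneg w) (pow_le_one₀ hv hv'))
      (by positivity) (sq_nonneg ε)
  calc _ ≤ 2 * ((a * (s.2.1 * (s.2.2 - s.1))) ^ 2 + (b * (s.1 * (s.2.2 - s.2.1))) ^ 2) :=
        add_sq_le
    _ ≤ 2 * (ε ^ 2 * (s.2.2 - s.1) ^ 2 + ε ^ 2 * (s.2.2 - s.2.1) ^ 2) := by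
        gcongr
        · exact hmul ha hy hy'
        · exact hmul hb hx hx'
    _ ≤ 2 * (ε ^ 2 * (s.2.2 - s.1) ^ 2 + ε ^ 2 * (s.2.2 - s.2.1) ^ 2
          + ε ^ 2 * (s.1 - s.2.1) ^ 2) := by
        have : 0 ≤ ε ^ 2 * (s.1 - s.2.1) ^ 2 := by positivity
        linarith
    _ = 4 * ε ^ 2 * sqDev s := by linear_combination (-2) * ε ^ 2 * two_mul_sqDev s

theorem abs_higher_order_part_le {a b e ε : ℝ} (hs : s ∈ simplex) (ha : |a| ≤ ε) (hb : |b| ≤ ε)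
    (he : |e| ≤ ε) (hε : ε ≤ 1) :
    |s.1 * (b * e) + s.2.1 * (a * e) + s.2.2 * (a * b) + a * b * e| ≤ 2 * ε ^ 2 := by
  obtain ⟨hx, hy, hz, hsum⟩ := hs
  have hmul {u v : ℝ} (hu : |u| ≤ ε) (hv : |v| ≤ ε) : |u * v| ≤ ε ^ 2 := by
    rw [abs_mul, sq]
    exact mul_le_mul hu hv (abs_nonneg v) ((abs_nonneg u).trans hu)
  have hcub : |a * b * e| ≤ ε ^ 2 := by
    rw [abs_mul]
    exact (mul_le_of_le_one_right (abs_nonneg _) (he.trans hε)).trans (hmul ha hb)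
  calc |s.1 * (b * e) + s.2.1 * (a * e) + s.2.2 * (a * b) + a * b * e|
      ≤ |s.1 * (b * e)| + |s.2.1 * (a * e)| + |s.2.2 * (a * b)| + |a * b * e| :=
        (abs_add_le _ _).trans (add_le_add_left (abs_add_three _ _ _) _)
    _ ≤ s.1 * ε ^ 2 + s.2.1 * ε ^ 2 + s.2.2 * ε ^ 2 + ε ^ 2 := by
        rw [abs_mul s.1, abs_mul s.2.1, abs_mul s.2.2, abs_of_nonneg hx, abs_of_nonneg hy,
          abs_of_nonneg hz]
        gcongr
        exacts [hmul hb he, hmul ha he, hmul ha hb]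
    _ = 2 * ε ^ 2 := by linear_combination ε ^ 2 * hsum

-- The gradient of the product vanishes at the barycentre, so its square is of order `sqDev s`.
theorem sq_coordProd_sub_le (hs : s ∈ simplex) (ht : t ∈ simplex) :
    (coordProd t - coordProd s) ^ 2 ≤
      8 * (1 - 27 * coordProd s) * ‖t - s‖ ^ 2 + 8 * ‖t - s‖ ^ 4 := by
  obtain ⟨ha, hb, he⟩ := abs_coord_sub_le s t
  have hlin := sq_linear_part_le hs ha hb
  have hrem := pow_le_pow_left₀ (abs_nonneg _)
    (abs_higher_order_part_le hs ha hb he (norm_sub_le_one hs ht)) 2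
  have hdev := mul_le_mul_of_nonneg_left (sqDev_le_one_sub_coordProd hs) (sq_nonneg ‖t - s‖)
  rw [sq_abs] at hrem
  have htaylor : coordProd t - coordProd s =
      ((t.1 - s.1) * (s.2.1 * (s.2.2 - s.1)) + (t.2.1 - s.2.1) * (s.1 * (s.2.2 - s.2.1)))
      + (s.1 * ((t.2.1 - s.2.1) * (t.2.2 - s.2.2)) + s.2.1 * ((t.1 - s.1) * (t.2.2 - s.2.2))
        + s.2.2 * ((t.1 - s.1) * (t.2.1 - s.2.1))
        + (t.1 - s.1) * (t.2.1 - s.2.1) * (t.2.2 - s.2.2)) := by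
    unfold coordProd
    linear_combination s.1 * s.2.1 * (ht.2.2.2 - hs.2.2.2)
  rw [htaylor]
  refine add_sq_le.trans ?_
  nlinarith

theorem coordProd_lt_coordProd_lineMap (hp : p ∈ simplex) (hp₀ : 0 < coordProd p)
    (hp₁ : coordProd p < 1 / 27) {r : ℝ} (hr₀ : 0 ≤ r) (hr₁ : r < 1) :
    coordProd p < coordProd (AffineMap.lineMap barycenter p r) := by
  obtain ⟨hx, hy, hz, -⟩ := hp
  have hamgm {u : ℝ} (hu : 0 ≤ u) : (1 / 3) ^ (1 - r) * u ^ r ≤ (1 - r) * (1 / 3) + r * u :=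
    Real.geom_mean_le_arith_mean2_weighted (by linarith) hr₀ (by norm_num) hu (by ring)
  calc coordProd p = coordProd p ^ (1 - r) * coordProd p ^ r := by
        rw [← Real.rpow_add hp₀, sub_add_cancel, Real.rpow_one]
    _ < (1 / 27) ^ (1 - r) * coordProd p ^ r := by
        have := Real.rpow_lt_rpow hp₀.le hp₁ (sub_pos.2 hr₁)
        gcongr
    _ = ((1 / 3) ^ (1 - r) * p.1 ^ r) * ((1 / 3) ^ (1 - r) * p.2.1 ^ r)
          * ((1 / 3) ^ (1 - r) * p.2.2 ^ r) := by
        have h27 : (1 / 27 : ℝ) ^ (1 - r) = ((1 / 3) ^ (1 - r)) ^ 3 := by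
          rw [Real.rpow_pow_comm (by norm_num)]; norm_num
        rw [h27, coordProd, Real.mul_rpow (mul_nonneg hx hy) hz, Real.mul_rpow hx hy]
        ring
    _ ≤ ((1 - r) * (1 / 3) + r * p.1) * ((1 - r) * (1 / 3) + r * p.2.1)
          * ((1 - r) * (1 / 3) + r * p.2.2) := by
        gcongr
        exacts [hamgm hx, hamgm hy, hamgm hz]
    _ = coordProd (AffineMap.lineMap barycenter p r) := by
        simp only [coordProd, barycenter, AffineMap.lineMap_apply_module, Prod.fst_add,
          Prod.snd_add, Prod.smul_fst, Prod.smul_snd, smul_eq_mul]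

theorem lineMap_injective_on_level (hp : p ∈ simplex) (hq : q ∈ simplex) (hp₀ : 0 < coordProd p)
    (hp₁ : coordProd p < 1 / 27) {r : ℝ} (hr : 0 ≤ r)
    (hqr : q = AffineMap.lineMap barycenter p r) (hpq : coordProd q = coordProd p) : q = p := by
  rcases lt_trichotomy r 1 with hlt | rfl | hgt
  · have := coordProd_lt_coordProd_lineMap hp hp₀ hp₁ hr hlt
    rw [← hqr, hpq] at this
    exact absurd this (lt_irrefl _)
  · rw [hqr, AffineMap.lineMap_apply_one]
  · have hpr : AffineMap.lineMap barycenter q r⁻¹ = p := by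
      rw [hqr, AffineMap.lineMap_lineMap_right, inv_mul_cancel₀ (by linarith),
        AffineMap.lineMap_apply_one]
    have := coordProd_lt_coordProd_lineMap hq (hpq ▸ hp₀) (hpq ▸ hp₁)
      (inv_nonneg.2 hr) (inv_lt_one_of_one_lt₀ hgt)
    rw [hpr, hpq] at this
    exact absurd this (lt_irrefl _)

theorem sq_norm_toComplex (s : State) : ‖toComplex s‖ ^ 2 = sqDev s := by
  have hsqrt : √3 * √3 = 3 := Real.mul_self_sqrt (by norm_num)
  rw [← Complex.normSq_eq_norm_sq, Complex.normSq_apply]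
  simp only [toComplex, sqDev]
  linear_combination ((s.2.1 - s.2.2) ^ 2 / 4) * hsqrt

theorem toComplex_ne_zero (hs : s ∈ simplex) (h : coordProd s < 1 / 27) : toComplex s ≠ 0 := by
  have := sqDev_pos hs h
  rw [← sq_norm_toComplex] at this
  exact norm_ne_zero_iff.1 (pow_ne_zero_iff two_ne_zero |>.1 this.ne')

theorem im_toComplex_div (s t : State) :
    (toComplex t / toComplex s).im = √3 / 2 * (cross s t / sqDev s) := by
  rw [Complex.div_im, Complex.normSq_eq_norm_sq, sq_norm_toComplex]
  simp only [toComplex, cross]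
  ring

theorem norm_toComplex_sub_le (s t : State) : ‖toComplex t - toComplex s‖ ≤ 4 * ‖t - s‖ := by
  obtain ⟨ha, hb, he⟩ := abs_coord_sub_le s t
  rw [abs_le] at ha hb he
  have hsqrt : √3 ≤ 2 := by rw [Real.sqrt_le_left (by norm_num)]; norm_num
  have hre : |(toComplex t - toComplex s).re| ≤ 2 * ‖t - s‖ := by
    simp only [toComplex, Complex.sub_re]
    rw [abs_le]; constructor <;> linarith
  have him : |(toComplex t - toComplex s).im| ≤ 1 * (2 * ‖t - s‖) := by
    have : (toComplex t - toComplex s).im =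
        √3 / 2 * ((t.2.1 - s.2.1) - (t.2.2 - s.2.2)) := by
      simp only [toComplex, Complex.sub_im]; ring
    rw [this, abs_mul, abs_of_nonneg (by positivity)]
    gcongr
    · linarith
    · rw [abs_le]; constructor <;> linarith
  linarith [Complex.norm_le_abs_re_add_abs_im (toComplex t - toComplex s)]

theorem eq_lineMap_of_toComplex_eq (hp : p ∈ simplex) (hq : q ∈ simplex) {r : ℝ}
    (h : toComplex q = r * toComplex p) : q = AffineMap.lineMap barycenter p r := by
  have hre := congrArg Complex.re h
  have him := congrArg Complex.im h
  simp only [toComplex, Complex.mul_re, Complex.mul_im, Complex.ofReal_re,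
    Complex.ofReal_im] at hre him
  have hdiff : q.2.1 - q.2.2 = r * (p.2.1 - p.2.2) := by
    refine mul_left_cancel₀ (show √3 / 2 ≠ 0 by positivity) ?_
    linarith
  have hpz : p.2.2 = 1 - p.1 - p.2.1 := by linarith [hp.2.2.2]
  have hqz : q.2.2 = 1 - q.1 - q.2.1 := by linarith [hq.2.2.2]
  rw [hpz, hqz] at hre hdiff
  simp only [Prod.ext_iff, barycenter, AffineMap.lineMap_apply_module, Prod.fst_add,
    Prod.snd_add, Prod.smul_fst, Prod.smul_snd, smul_eq_mul, hpz, hqz]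
  refine ⟨?_, ?_, ?_⟩ <;> linarith

theorem eq_of_arg_eq (hp : p ∈ simplex) (hq : q ∈ simplex) (hp₀ : 0 < coordProd p)
    (hp₁ : coordProd p < 1 / 27) (hpq : coordProd q = coordProd p)
    (harg : ((toComplex q).arg : Real.Angle) = (toComplex p).arg) : q = p := by
  have hwp := toComplex_ne_zero hp hp₁
  have hwq := toComplex_ne_zero hq (hpq ▸ hp₁)
  have hratio := (Complex.arg_eq_arg_iff hwq hwp).1 (Complex.arg_coe_angle_eq_iff.1 harg)
  refine lineMap_injective_on_level hp hq hp₀ hp₁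
    (r := ‖toComplex q‖ / ‖toComplex p‖) (by positivity)
    (eq_lineMap_of_toComplex_eq hp hq ?_) hpq
  have hnp : (‖toComplex p‖ : ℂ) ≠ 0 := by exact_mod_cast norm_ne_zero_iff.2 hwp
  have hnq : (‖toComplex q‖ : ℂ) ≠ 0 := by exact_mod_cast norm_ne_zero_iff.2 hwq
  calc toComplex q = ↑(‖toComplex q‖ / ‖toComplex p‖)
        * (↑‖toComplex p‖ / ↑‖toComplex q‖ * toComplex q) := by push_cast; field_simp
    _ = ↑(‖toComplex q‖ / ‖toComplex p‖) * toComplex p := by rw [hratio]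

-- A cluster point of the angles is carried by an ultrafilter, along which the states themselves
-- converge by compactness; the limit has the right product and the right angle.
theorem mapClusterPt_of_mapClusterPt_arg {s : ℕ → State} (hs : ∀ n, s n ∈ simplex)
    (hM : Tendsto (fun n => coordProd (s n)) atTop (𝓝 (coordProd p))) (hp : p ∈ simplex)
    (hp₀ : 0 < coordProd p) (hp₁ : coordProd p < 1 / 27)
    (harg : MapClusterPt ((toComplex p).arg : Real.Angle) atTop
      fun n => ((toComplex (s n)).arg : Real.Angle)) : MapClusterPt p atTop s := by
  obtain ⟨U, hU, hUarg⟩ := mapClusterPt_iff_ultrafilter.1 harg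
  obtain ⟨q, hq, hUq⟩ := isCompact_simplex.ultrafilter_le_nhds (U.map s)
    (le_principal_iff.2 (mem_map.2 (univ_mem' hs)))
  have hUq' : Tendsto s U (𝓝 q) := hUq
  have hMq : coordProd q = coordProd p :=
    tendsto_nhds_unique ((continuous_coordProd.tendsto q).comp hUq') (hM.mono_left hU)
  have hargq : ((toComplex q).arg : Real.Angle) = (toComplex p).arg :=
    tendsto_nhds_unique ((Complex.continuousAt_arg_coe_angle
      (toComplex_ne_zero hq (hMq ▸ hp₁))).tendsto.comp
        ((continuous_toComplex.tendsto q).comp hUq')) hUarg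
  rw [eq_of_arg_eq hp hq hp₀ hp₁ hMq hargq] at hUq'
  exact mapClusterPt_iff_ultrafilter.2 ⟨U, hU, hUq'⟩

theorem mapClusterPt_of_tendsto_sum_cross {s : ℕ → State} {δ : ℝ} {r : ℕ → ℝ}
    (hs : ∀ n, s n ∈ simplex) (hM : Tendsto (fun n => coordProd (s n)) atTop (𝓝 (coordProd p)))
    (hp : p ∈ simplex) (hp₀ : 0 < coordProd p) (hp₁ : coordProd p < 1 / 27) (hδ : 0 < δ)
    (hdev : ∀ n, δ ≤ sqDev (s n)) (hr : ∀ n, ‖s (n + 1) - s n‖ ≤ r n)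
    (hrs : Summable fun n => r n ^ 2)
    (hcross : Tendsto (fun n => ∑ k ∈ Finset.range n, cross (s k) (s (k + 1)) / sqDev (s k))
      atTop atTop) : MapClusterPt p atTop s := by
  have hnorm (n) : √δ ≤ ‖toComplex (s n)‖ := by
    rw [Real.sqrt_le_left (norm_nonneg _), sq_norm_toComplex]
    exact hdev n
  have hw (n) : toComplex (s n) ≠ 0 :=
    norm_pos_iff.1 ((Real.sqrt_pos.2 hδ).trans_le (hnorm n))
  have hquot (n) : ‖toComplex (s (n + 1)) / toComplex (s n) - 1‖ ≤ 4 / √δ * r n := by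
    rw [← div_self (hw n), ← sub_div, norm_div, div_mul_eq_mul_div]
    exact div_le_div₀ (mul_nonneg (by norm_num) ((norm_nonneg _).trans (hr n)))
      ((norm_toComplex_sub_le _ _).trans (by gcongr; exact hr n)) (Real.sqrt_pos.2 hδ) (hnorm n)
  refine mapClusterPt_of_mapClusterPt_arg hs hM hp hp₀ hp₁
    (mapClusterPt_arg_of_tendsto_sum_im hw hquot ?_ ?_ _)
  · simp_rw [mul_pow]
    exact hrs.mul_left _
  · simp_rw [im_toComplex_div, ← Finset.mul_sum]
    exact hcross.const_mul_atTop (by positivity)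

end Simplex

/-! ### One transition -/

section Dynamics

/-- The state reached from `s` by the transition `i`, when the total weight before the transition
is `g`. -/
def nextState (α g : ℝ) (i : Fin 6) (s : State) : State :=
  ((g * s.1 + (affIncr α i).1) / (g + (4 + α)), (g * s.2.1 + (affIncr α i).2.1) / (g + (4 + α)),
    (g * s.2.2 + (affIncr α i).2.2) / (g + (4 + α)))

/-- The probability of the transition `i` at `s`. -/
def transProb (i : Fin 6) (s : State) : ℝ := affProb i s.1 s.2.1 s.2.2

/-- The transition operator of the chain: the mean of `f` after one transition from `s`, when the
total weight before the transition is `g`. -/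
def transOp (α g : ℝ) (f : State → ℝ) (s : State) : ℝ := ∑ i, transProb i s * f (nextState α g i s)

/-- The part of the simplex where each type has weight at least `m`, when the total weight is
`g`. -/
def weightRegion (m g : ℝ) : Set State :=
  {s ∈ simplex | m ≤ g * s.1 ∧ m ≤ g * s.2.1 ∧ m ≤ g * s.2.2}

variable {α g m : ℝ} {s : State}

theorem affGamma_pos {γ₀ : ℝ} (hα : -2 < α) (hγ₀ : 0 < γ₀) (n : ℕ) : 0 < affGamma γ₀ α n :=
  add_pos_of_pos_of_nonneg hγ₀ (mul_nonneg (by linarith) n.cast_nonneg)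

theorem affGamma_succ (γ₀ α : ℝ) (n : ℕ) :
    affGamma γ₀ α (n + 1) = affGamma γ₀ α n + (4 + α) := by
  simp only [affGamma, Nat.cast_succ]
  ring

theorem le_affGamma (γ₀ : ℝ) (hα : -2 < α) (n : ℕ) : γ₀ ≤ affGamma γ₀ α n :=
  le_add_of_nonneg_right (mul_nonneg (by linarith) n.cast_nonneg)

theorem tendsto_affGamma (γ₀ : ℝ) (hα : -2 < α) : Tendsto (affGamma γ₀ α) atTop atTop :=
  tendsto_atTop_add_const_left _ _ <|
    (tendsto_natCast_atTop_atTop).const_mul_atTop (by linarith)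

theorem summable_sq_div_affGamma {γ₀ : ℝ} (hα : -2 < α) (hγ₀ : 0 < γ₀) (C : ℝ) :
    Summable fun n : ℕ => (C / affGamma γ₀ α (n + 1)) ^ 2 := by
  have hle (n : ℕ) : (n : ℝ) ≤ affGamma γ₀ α n := by
    unfold affGamma
    nlinarith [n.cast_nonneg (α := ℝ)]
  refine .of_nonneg_of_le (fun n => sq_nonneg _) (fun n => ?_)
    (((summable_nat_add_iff 1).mpr (Real.summable_one_div_nat_pow.mpr one_lt_two)).mul_left (C ^ 2))
  have hγ := affGamma_pos hα hγ₀ (n + 1)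
  calc (C / affGamma γ₀ α (n + 1)) ^ 2 = C ^ 2 * (1 / affGamma γ₀ α (n + 1)) ^ 2 := by ring
    _ ≤ C ^ 2 * (1 / ((n + 1 : ℕ) : ℝ)) ^ 2 := by
        gcongr; exact hle (n + 1)
    _ = C ^ 2 * (1 / ((n + 1 : ℕ) : ℝ) ^ 2) := by rw [one_div_pow]

theorem tendsto_sum_one_div_affGamma {γ₀ : ℝ} (hα : -2 < α) (hγ₀ : 0 < γ₀) :
    Tendsto (fun n => ∑ k ∈ Finset.range n, 1 / affGamma γ₀ α (k + 1)) atTop atTop := by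
  have hc : 0 < γ₀ + (4 + α) := by linarith
  have hle (k : ℕ) : (1 / (γ₀ + (4 + α))) * (1 / ((k : ℝ) + 1)) ≤ 1 / affGamma γ₀ α (k + 1) := by
    have hγ := affGamma_pos hα hγ₀ (k + 1)
    rw [one_div_mul_one_div]
    refine one_div_le_one_div_of_le hγ ?_
    simp only [affGamma, Nat.cast_succ]
    nlinarith [mul_nonneg hγ₀.le k.cast_nonneg]
  refine tendsto_atTop_mono (fun n => ?_)
    (Real.tendsto_sum_range_one_div_nat_succ_atTop.const_mul_atTop (one_div_pos.mpr hc))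
  rw [Finset.mul_sum]
  exact Finset.sum_le_sum fun k _ => hle k

theorem affIncr_bounds (hα : -2 < α) (i : Fin 6) :
    (affIncr α i).1 ∈ Icc 0 (4 + α) ∧ (affIncr α i).2.1 ∈ Icc 0 (4 + α) ∧
      (affIncr α i).2.2 ∈ Icc 0 (4 + α) := by
  fin_cases i <;> refine ⟨⟨?_, ?_⟩, ⟨?_, ?_⟩, ?_, ?_⟩ <;> simp only [affIncr] <;> linarith

theorem affIncr_sum (α : ℝ) (i : Fin 6) :
    (affIncr α i).1 + (affIncr α i).2.1 + (affIncr α i).2.2 = 4 + α := by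
  fin_cases i <;> simp only [affIncr] <;> ring

theorem nextState_mem_simplex (hα : -2 < α) (hg : 0 < g) (hs : s ∈ simplex) (i : Fin 6) :
    nextState α g i s ∈ simplex := by
  obtain ⟨hx, hy, hz, hsum⟩ := hs
  obtain ⟨⟨h₁, -⟩, ⟨h₂, -⟩, h₃, -⟩ := affIncr_bounds hα i
  have hg' : 0 < g + (4 + α) := by linarith
  refine ⟨by simp only [nextState]; positivity, by simp only [nextState]; positivity,
    by simp only [nextState]; positivity, ?_⟩
  simp only [nextState]
  rw [← add_div, ← add_div, div_eq_one_iff_eq hg'.ne']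
  linear_combination g * hsum + affIncr_sum α i

theorem norm_nextState_sub_le (hα : -2 < α) (hg : 0 < g) (hs : s ∈ simplex) (i : Fin 6) :
    ‖nextState α g i s - s‖ ≤ (4 + α) / (g + (4 + α)) := by
  have hg' : 0 < g + (4 + α) := by linarith
  have hb : 0 ≤ 4 + α := by linarith
  have hcoord {x a : ℝ} (hx₀ : 0 ≤ x) (hx₁ : x ≤ 1) (ha : a ∈ Icc 0 (4 + α)) :
      ‖(g * x + a) / (g + (4 + α)) - x‖ ≤ (4 + α) / (g + (4 + α)) := by
    have : (g * x + a) / (g + (4 + α)) - x = (a - (4 + α) * x) / (g + (4 + α)) := by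
      field_simp; ring
    rw [this, Real.norm_eq_abs, abs_div, abs_of_pos hg']
    gcongr
    rw [abs_le]
    constructor <;> nlinarith [ha.1, ha.2]
  obtain ⟨⟨hx, hy, hz⟩, hx', hy', hz'⟩ := simplex_subset_Icc hs
  obtain ⟨h₁, h₂, h₃⟩ := affIncr_bounds hα i
  exact norm_prod_le_iff.mpr ⟨hcoord hx hx' h₁, norm_prod_le_iff.mpr
    ⟨hcoord hy hy' h₂, hcoord hz hz' h₃⟩⟩

theorem sq_norm_nextState_sub_le (hα : -2 < α) (hg : 0 < g) (hs : s ∈ simplex) (i : Fin 6) :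
    ‖nextState α g i s - s‖ ^ 2 ≤ (4 + α) ^ 2 / (g * (g + (4 + α))) := by
  have hb : 0 < 4 + α := by linarith
  calc ‖nextState α g i s - s‖ ^ 2 ≤ ((4 + α) / (g + (4 + α))) ^ 2 := by
        gcongr; exact norm_nextState_sub_le hα hg hs i
    _ = (4 + α) ^ 2 / ((g + (4 + α)) * (g + (4 + α))) := by rw [div_pow, sq (g + (4 + α))]
    _ ≤ (4 + α) ^ 2 / (g * (g + (4 + α))) := by gcongr; linarith

theorem nextState_mem_weightRegion (hα : -2 < α) (hg : 0 < g) (hs : s ∈ weightRegion m g)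
    (i : Fin 6) : nextState α g i s ∈ weightRegion m (g + (4 + α)) := by
  obtain ⟨hs, hx, hy, hz⟩ := hs
  obtain ⟨⟨h₁, -⟩, ⟨h₂, -⟩, h₃, -⟩ := affIncr_bounds hα i
  have hg' : g + (4 + α) ≠ 0 := by linarith
  refine ⟨nextState_mem_simplex hα hg hs i, ?_, ?_, ?_⟩ <;> simp only [nextState] <;>
    rw [mul_div_cancel₀ _ hg'] <;> linarith

theorem coord_pos_of_mem_weightRegion (hm : 0 < m) (hg : 0 < g) (hs : s ∈ weightRegion m g) :
    0 < s.1 ∧ 0 < s.2.1 ∧ 0 < s.2.2 :=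
  ⟨pos_of_mul_pos_right (hm.trans_le hs.2.1) hg.le,
    pos_of_mul_pos_right (hm.trans_le hs.2.2.1) hg.le,
    pos_of_mul_pos_right (hm.trans_le hs.2.2.2) hg.le⟩

theorem nextState_injective (hα : -2 < α) (hg : 0 < g) (s : State) :
    Function.Injective fun i => nextState α g i s := by
  intro i j h
  have hg' : g + (4 + α) ≠ 0 := by linarith
  simp only [nextState, Prod.mk.injEq, div_left_inj' hg', add_right_inj] at h
  obtain ⟨h₁, h₂, h₃⟩ := h
  fin_cases i <;> fin_cases j <;> first | rfl | (simp only [affIncr] at h₁ h₂ h₃; linarith)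

theorem continuous_nextState (α g : ℝ) (i : Fin 6) : Continuous (nextState α g i) := by
  unfold nextState; fun_prop

theorem sum_transProb (hs : s ∈ simplex) : ∑ i, transProb i s = 1 := by
  simp only [Fin.sum_univ_six, transProb, affProb]
  linear_combination (s.1 + s.2.1 + s.2.2 + 1) * hs.2.2.2

theorem transProb_nonneg (hs : s ∈ simplex) (i : Fin 6) : 0 ≤ transProb i s := by
  obtain ⟨hx, hy, hz, -⟩ := hs
  fin_cases i <;> simp only [transProb, affProb] <;> positivity

theorem transProb_pos (hs : 0 < s.1 ∧ 0 < s.2.1 ∧ 0 < s.2.2) (i : Fin 6) : 0 < transProb i s := by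
  obtain ⟨hx, hy, hz⟩ := hs
  fin_cases i <;> simp only [transProb, affProb] <;> positivity

theorem transOp_mono {f f' : State → ℝ} (hs : s ∈ simplex)
    (h : ∀ i, f (nextState α g i s) ≤ f' (nextState α g i s)) :
    transOp α g f s ≤ transOp α g f' s :=
  Finset.sum_le_sum fun i _ => mul_le_mul_of_nonneg_left (h i) (transProb_nonneg hs i)

theorem transOp_add (α g : ℝ) (f f' : State → ℝ) (s : State) :
    transOp α g (fun t => f t + f' t) s = transOp α g f s + transOp α g f' s := by
  simp only [transOp, mul_add, Finset.sum_add_distrib]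

theorem transOp_const_mul_add_const (α g : ℝ) (f : State → ℝ) (hs : s ∈ simplex) (a c : ℝ) :
    transOp α g (fun t => a * f t + c) s = a * transOp α g f s + c := by
  simp only [transOp, mul_add, Finset.sum_add_distrib, ← Finset.sum_mul, sum_transProb hs, one_mul,
    Finset.mul_sum, mul_left_comm]

theorem sum_transProb_mul_affIncr (α : ℝ) (hs : s ∈ simplex) :
    (∑ i, transProb i s * (affIncr α i).1 = s.1 * (4 + α + (2 + α) * (s.2.2 - s.2.1))) ∧
    (∑ i, transProb i s * (affIncr α i).2.1 = s.2.1 * (4 + α + (2 + α) * (s.1 - s.2.2))) ∧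
    (∑ i, transProb i s * (affIncr α i).2.2 = s.2.2 * (4 + α + (2 + α) * (s.2.1 - s.1))) := by
  obtain ⟨x, y, z⟩ := s
  obtain rfl : z = 1 - x - y := by linarith [hs.2.2.2]
  simp only [Fin.sum_univ_six, transProb, affProb, affIncr]
  refine ⟨?_, ?_, ?_⟩ <;> ring

theorem transOp_cross (hα : -2 < α) (hg : 0 < g) (hs : s ∈ simplex) :
    transOp α g (cross s) s = (2 + α) * angularDrift s / (g + (4 + α)) := by
  obtain ⟨h₁, h₂, h₃⟩ := sum_transProb_mul_affIncr α hs
  have hg' : g + (4 + α) ≠ 0 := by linarith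
  have hterm (i : Fin 6) : transProb i s * cross s (nextState α g i s) =
      ((s.2.2 - s.2.1) * (transProb i s * (affIncr α i).1) +
        (s.1 - s.2.2) * (transProb i s * (affIncr α i).2.1) +
        (s.2.1 - s.1) * (transProb i s * (affIncr α i).2.2)) / (g + (4 + α)) := by
    simp only [cross, nextState]
    field_simp
    ring
  rw [transOp, Finset.sum_congr rfl fun i _ => hterm i, ← Finset.sum_div, Finset.sum_add_distrib,
    Finset.sum_add_distrib, ← Finset.mul_sum, ← Finset.mul_sum, ← Finset.mul_sum, h₁, h₂, h₃,
    angularDrift]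
  ring

/-- The relative decrease of the mean of `coordProd` in one transition. -/
def prodDecay (α g : ℝ) : ℝ :=
  ((3 * (4 + α) ^ 2 - 6 * (4 + α) + 6) * g + (4 + α) ^ 3) / (g + (4 + α)) ^ 3

theorem transOp_coordProd (hα : -2 < α) (hg : 0 < g) (hs : s ∈ simplex) :
    transOp α g coordProd s = coordProd s * (1 - prodDecay α g) := by
  have hg' : g + (4 + α) ≠ 0 := by linarith
  obtain ⟨x, y, z⟩ := s
  obtain rfl : z = 1 - x - y := by linarith [hs.2.2.2]
  simp only [transOp, Fin.sum_univ_six, transProb, affProb, coordProd, nextState, affIncr,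
    prodDecay]
  field_simp
  ring

theorem prodDecay_le (hα : -2 < α) (hg : 0 < g) :
    prodDecay α g ≤ (3 * (4 + α) ^ 2 + 6) / (g * (g + (4 + α))) := by
  have hb : 0 < 4 + α := by linarith
  unfold prodDecay
  generalize 4 + α = b at hb
  calc ((3 * b ^ 2 - 6 * b + 6) * g + b ^ 3) / (g + b) ^ 3
      ≤ ((3 * b ^ 2 + 6) * (g + b)) / (g + b) ^ 3 := by
        gcongr
        nlinarith [mul_pos hb hg, pow_pos hb 3]
    _ = (3 * b ^ 2 + 6) / ((g + b) * (g + b)) := by field_simp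
    _ ≤ (3 * b ^ 2 + 6) / (g * (g + b)) := by gcongr; linarith

theorem le_prodDecay {γ₀ : ℝ} (hα : -2 < α) (hγ₀ : 0 < γ₀) (hg : γ₀ ≤ g) :
    3 * (γ₀ / (γ₀ + (4 + α))) ^ 2 / (g * (g + (4 + α))) ≤ prodDecay α g := by
  have hb : 0 < 4 + α := by linarith
  unfold prodDecay
  generalize 4 + α = b at hb
  have hg₀ : 0 < g := hγ₀.trans_le hg
  have hratio : γ₀ / (γ₀ + b) ≤ g / (g + b) := by
    rw [div_le_div_iff₀ (by positivity) (by positivity)]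
    nlinarith
  calc 3 * (γ₀ / (γ₀ + b)) ^ 2 / (g * (g + b)) ≤ 3 * (g / (g + b)) ^ 2 / (g * (g + b)) := by gcongr
    _ = 3 * g / (g + b) ^ 3 := by field_simp
    _ ≤ _ := by
        gcongr
        nlinarith [mul_nonneg hg₀.le (sq_nonneg (b - 1)), pow_pos hb 3]

theorem prodDecay_nonneg (hα : -2 < α) (hg : 0 < g) : 0 ≤ prodDecay α g := by
  have hb : 0 < 4 + α := by linarith
  exact le_trans (by positivity) (le_prodDecay hα hg le_rfl)

theorem one_div_sub_one_div_add (hα : -2 < α) (hg : 0 < g) :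
    1 / g - 1 / (g + (4 + α)) = (4 + α) * (1 / (g * (g + (4 + α)))) := by
  have hg' : g + (4 + α) ≠ 0 := by linarith
  field_simp
  ring

theorem exists_transOp_coordProd_mul_le {γ₀ : ℝ} (hα : -2 < α) (hγ₀ : 0 < γ₀) :
    ∃ e > 0, ∀ g ≥ γ₀, ∀ s ∈ simplex,
      transOp α g (fun t => coordProd t * (1 - e / (g + (4 + α)))) s
        ≤ coordProd s * (1 - e / g) := by
  have hb : 0 < 4 + α := by linarith
  set c := 3 * (γ₀ / (γ₀ + (4 + α))) ^ 2
  refine ⟨min ((4 + α) / 2) (c / (2 * (4 + α))), by positivity, fun g hg s hs => ?_⟩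
  set e := min ((4 + α) / 2) (c / (2 * (4 + α)))
  have hg₀ : 0 < g := hγ₀.trans_le hg
  have he₀ : e / (g + (4 + α)) ≤ 1 / 2 := by
    rw [div_le_iff₀ (by positivity)]
    linarith [min_le_left ((4 + α) / 2) (c / (2 * (4 + α)))]
  have he₁ : e * (2 * (4 + α)) ≤ c := (le_div_iff₀ (by positivity)).mp (min_le_right _ _)
  have hdecay := le_prodDecay hα hγ₀ hg
  have hdiff := one_div_sub_one_div_add hα hg₀
  have hfactor : (1 - prodDecay α g) * (1 - e / (g + (4 + α))) ≤ 1 - e / g := by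
    have : e / g - e / (g + (4 + α)) ≤ prodDecay α g / 2 := by
      calc e / g - e / (g + (4 + α)) = e * (1 / g - 1 / (g + (4 + α))) := by ring
        _ = e * (2 * (4 + α)) * (1 / (g * (g + (4 + α)))) / 2 := by rw [hdiff]; ring
        _ ≤ c * (1 / (g * (g + (4 + α)))) / 2 := by gcongr
        _ ≤ prodDecay α g / 2 := by rw [mul_one_div]; gcongr
    nlinarith [prodDecay_nonneg hα hg₀]
  calc transOp α g (fun t => coordProd t * (1 - e / (g + (4 + α)))) s
      = transOp α g coordProd s * (1 - e / (g + (4 + α))) := by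
        simp only [transOp, Finset.sum_mul, mul_assoc]
    _ = coordProd s * ((1 - prodDecay α g) * (1 - e / (g + (4 + α)))) := by
        rw [transOp_coordProd hα hg₀ hs, mul_assoc]
    _ ≤ coordProd s * (1 - e / g) :=
        mul_le_mul_of_nonneg_left hfactor (coordProd_nonneg hs)

theorem transOp_coordProd_le (hα : -2 < α) (hg : 0 < g) (hs : s ∈ simplex) :
    transOp α g coordProd s ≤ coordProd s := by
  rw [transOp_coordProd hα hg hs]
  exact mul_le_of_le_one_right (coordProd_nonneg hs) (by linarith [prodDecay_nonneg hα hg])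

/-- The deficit of the product `x y z` from its maximum on the simplex. -/
def deficit (s : State) : ℝ := 1 / 27 - coordProd s

theorem deficit_nonneg (hs : s ∈ simplex) : 0 ≤ deficit s := sub_nonneg.mpr (coordProd_le hs)

theorem deficit_le (hs : s ∈ simplex) : deficit s ≤ 1 / 27 :=
  sub_le_self _ (coordProd_nonneg hs)

theorem transOp_deficit_le (hα : -2 < α) (hg : 0 < g) (hs : s ∈ simplex) :
    transOp α g deficit s ≤ deficit s + (3 * (4 + α) ^ 2 + 6) * (1 / (g * (g + (4 + α)))) := by
  have htrans : transOp α g deficit s = deficit s + coordProd s * prodDecay α g := by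
    have hdeficit : deficit = fun t => -1 * coordProd t + 1 / 27 := by
      funext t; rw [deficit]; ring
    rw [hdeficit, transOp_const_mul_add_const α g _ hs, transOp_coordProd hα hg hs]
    ring
  have hM := coordProd_le hs
  have hdecay := prodDecay_le hα hg
  rw [htrans, mul_one_div]
  nlinarith [prodDecay_nonneg hα hg]

theorem transOp_deficit_sq_le (hα : -2 < α) (hg : 0 < g) (hs : s ∈ simplex) :
    transOp α g (fun t => deficit t ^ 2) s ≤ deficit s ^ 2 +
      (222 * (4 + α) ^ 2 + 12) * (1 / (g * (g + (4 + α)))) * deficit s +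
      8 * (4 + α) ^ 4 * (1 / (g * (g + (4 + α)))) ^ 2 := by
  have hD := deficit_nonneg hs
  set r := 1 / (g * (g + (4 + α)))
  have hincr (i : Fin 6) : (deficit (nextState α g i s) - deficit s) ^ 2 ≤
      216 * (4 + α) ^ 2 * r * deficit s + 8 * (4 + α) ^ 4 * r ^ 2 := by
    have hnorm : ‖nextState α g i s - s‖ ^ 2 ≤ (4 + α) ^ 2 * r := by
      rw [mul_one_div]; exact sq_norm_nextState_sub_le hα hg hs i
    calc (deficit (nextState α g i s) - deficit s) ^ 2
        = (coordProd (nextState α g i s) - coordProd s) ^ 2 := by unfold deficit; ring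
      _ ≤ 8 * (1 - 27 * coordProd s) * ‖nextState α g i s - s‖ ^ 2 +
            8 * ‖nextState α g i s - s‖ ^ 4 :=
          sq_coordProd_sub_le hs (nextState_mem_simplex hα hg hs i)
      _ = 216 * deficit s * ‖nextState α g i s - s‖ ^ 2 +
            8 * (‖nextState α g i s - s‖ ^ 2) ^ 2 := by
          unfold deficit; ring
      _ ≤ 216 * deficit s * ((4 + α) ^ 2 * r) + 8 * ((4 + α) ^ 2 * r) ^ 2 := by gcongr
      _ = _ := by ring
  have hmean := transOp_deficit_le hα hg hs
  calc transOp α g (fun t => deficit t ^ 2) s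
      ≤ transOp α g (fun t => 2 * deficit s * deficit t + (-deficit s ^ 2 +
          216 * (4 + α) ^ 2 * r * deficit s + 8 * (4 + α) ^ 4 * r ^ 2)) s :=
        transOp_mono hs fun i => by linear_combination hincr i
    _ = 2 * deficit s * transOp α g deficit s + (-deficit s ^ 2 +
          216 * (4 + α) ^ 2 * r * deficit s + 8 * (4 + α) ^ 4 * r ^ 2) :=
        transOp_const_mul_add_const α g _ hs _ _
    _ ≤ _ := by nlinarith

theorem add_div_sq_le_div_sq {b A L : ℝ} (hb : 1 ≤ b) (hg : 0 < g) (hA : 0 ≤ A)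
    (hL : 0 ≤ L) :
    L * (1 / (g * (g + b))) ^ 2 + A * (1 / (g * (g + b))) * (1 / (g + b)) +
      (L + A) / b * (1 / (g + b)) ^ 2 ≤ (L + A) / b * (1 / g) ^ 2 := by
  set r := 1 / (g * (g + b)) with hr
  have hr₀ : 0 < r := by positivity
  have hrg : r ≤ 1 / g := one_div_le_one_div_of_le hg (by nlinarith)
  have hg'₀ : 0 < 1 / (g + b) := by positivity
  have hdiff : (L + A) / b * (1 / g - 1 / (g + b)) = (L + A) * r := by
    rw [hr]; field_simp; ring
  have : L * r ^ 2 + A * r * (1 / (g + b)) ≤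
      (L + A) / b * (1 / g - 1 / (g + b)) * (1 / g + 1 / (g + b)) := by
    calc L * r ^ 2 + A * r * (1 / (g + b)) = L * r * r + A * r * (1 / (g + b)) := by ring
      _ ≤ L * r * (1 / g + 1 / (g + b)) + A * r * (1 / g + 1 / (g + b)) := by
          gcongr <;> linarith
      _ = _ := by rw [hdiff]; ring
  linear_combination this

theorem exists_transOp_deficit_sq_add_le (hα : -2 < α) :
    ∃ C₁ ≥ 0, ∃ C₂ ≥ 0, ∀ g > 0, ∀ s ∈ simplex,
      transOp α g (fun t => deficit t ^ 2 + (C₁ * (1 / (g + (4 + α))) * deficit t +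
        C₂ * (1 / (g + (4 + α))) ^ 2)) s ≤
      deficit s ^ 2 + (C₁ * (1 / g) * deficit s + C₂ * (1 / g) ^ 2) := by
  have hb : 2 < 4 + α := by linarith
  obtain ⟨B, hB⟩ : ∃ B, B = 222 * (4 + α) ^ 2 + 12 := ⟨_, rfl⟩
  obtain ⟨K, hK⟩ : ∃ K, K = 3 * (4 + α) ^ 2 + 6 := ⟨_, rfl⟩
  have hB₀ : 0 ≤ B := by rw [hB]; positivity
  have hK₀ : 0 ≤ K := by rw [hK]; positivity
  refine ⟨B / (4 + α), by positivity, (8 * (4 + α) ^ 4 + B / (4 + α) * K) / (4 + α),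
    by positivity, fun g hg s hs => ?_⟩
  have hlinear := transOp_deficit_le hα hg hs
  have hsquare := transOp_deficit_sq_le hα hg hs
  have hdiff := one_div_sub_one_div_add hα hg
  have htail := add_div_sq_le_div_sq (b := 4 + α) (by linarith) hg
    (by positivity : 0 ≤ B / (4 + α) * K) (by positivity : 0 ≤ 8 * (4 + α) ^ 4)
  rw [← hK] at hlinear
  rw [← hB] at hsquare
  have hB' : B = B / (4 + α) * (4 + α) := by field_simp
  rw [transOp_add, transOp_const_mul_add_const α g _ hs]
  set r := 1 / (g * (g + (4 + α)))
  set C₁ := B / (4 + α)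
  have hfirst : B * r * deficit s = C₁ * (1 / g - 1 / (g + (4 + α))) * deficit s := by
    rw [hdiff, hB']; ring
  have hcross : C₁ * (1 / (g + (4 + α))) * transOp α g deficit s ≤
      C₁ * (1 / (g + (4 + α))) * (deficit s + K * r) := by gcongr
  linear_combination hsquare + hfirst + hcross + htail

/-- The potential showing that no type dies out. The mean of `-log (x y z)` alone increases, by
the second order term of the logarithm, which the correction compensates. -/
def logPotential (C g : ℝ) (s : State) : ℝ :=
  (C / (g * s.1) - Real.log s.1) + (C / (g * s.2.1) - Real.log s.2.1) +
    (C / (g * s.2.2) - Real.log s.2.2)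

theorem div_add_sub_log_add_le {b d m u : ℝ} (hm : 0 < m) (hu : m ≤ u) (hd : d ∈ Icc 0 b) :
    b * (1 + b / m) / 2 / (u + d) - Real.log (u + d) ≤
      b * (1 + b / m) / 2 / u - Real.log u - d / u := by
  obtain ⟨hd₀, hdb⟩ := hd
  have hb : 0 ≤ b := hd₀.trans hdb
  have hu₀ : 0 < u := hm.trans_le hu
  have hlog : d / u - (d / u) ^ 2 / 2 ≤ Real.log (u + d) - Real.log u := by
    rw [← Real.log_div (by positivity) (by positivity), add_div, div_self hu₀.ne']
    refine le_trans ?_ (Real.le_log_one_add_of_nonneg (x := d / u) (by positivity))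
    rw [le_div_iff₀ (by positivity)]
    nlinarith [pow_nonneg (by positivity : 0 ≤ d / u) 3]
  have hgrowth : d * (u + d) ≤ b * (1 + b / m) * u := by
    have : d ≤ b / m * u := by
      calc d ≤ b := hdb
        _ = b / m * m := by field_simp
        _ ≤ b / m * u := by gcongr
    calc d * (u + d) ≤ b * (u + b / m * u) := by gcongr
      _ = _ := by ring
  have hgain : (d / u) ^ 2 / 2 ≤
      b * (1 + b / m) / 2 / u - b * (1 + b / m) / 2 / (u + d) := by
    have : b * (1 + b / m) / 2 / u - b * (1 + b / m) / 2 / (u + d) - (d / u) ^ 2 / 2 =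
        d * (b * (1 + b / m) * u - d * (u + d)) / (2 * u ^ 2 * (u + d)) := by
      field_simp; ring
    have hpos : 0 ≤ d * (b * (1 + b / m) * u - d * (u + d)) / (2 * u ^ 2 * (u + d)) :=
      div_nonneg (mul_nonneg hd₀ (by linarith)) (by positivity)
    linarith
  linarith

theorem transOp_logPotential_le (hα : -2 < α) (hm : 0 < m) (hg : 0 < g)
    (hs : s ∈ weightRegion m g) :
    transOp α g (logPotential ((4 + α) * (1 + (4 + α) / m) / 2) (g + (4 + α))) s ≤
      logPotential ((4 + α) * (1 + (4 + α) / m) / 2) g s := by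
  set C := (4 + α) * (1 + (4 + α) / m) / 2 with hC
  have hb : 0 < 4 + α := by linarith
  have hg' : 0 < g + (4 + α) := by positivity
  obtain ⟨hx, hy, hz⟩ := coord_pos_of_mem_weightRegion hm hg hs
  have hcoord {x d : ℝ} (hx : 0 < x) (hmx : m ≤ g * x) (hd : d ∈ Icc 0 (4 + α)) :
      C / ((g + (4 + α)) * ((g * x + d) / (g + (4 + α)))) -
        Real.log ((g * x + d) / (g + (4 + α))) ≤
      C / (g * x) - Real.log x + (4 + α) / g - d / (g * x) := by
    have hlog : Real.log (g + (4 + α)) ≤ Real.log g + (4 + α) / g := by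
      have := Real.log_le_sub_one_of_pos (div_pos hg' hg)
      rw [Real.log_div hg'.ne' hg.ne', add_div, div_self hg.ne'] at this
      linarith
    have hgx : 0 < g * x + d := add_pos_of_pos_of_nonneg (by positivity) hd.1
    have := div_add_sub_log_add_le hm hmx hd
    rw [mul_div_cancel₀ _ hg'.ne', Real.log_div hgx.ne' hg'.ne']
    rw [← hC, Real.log_mul hg.ne' hx.ne'] at this
    linarith
  obtain ⟨h₁, h₂, h₃⟩ := sum_transProb_mul_affIncr α hs.1
  calc transOp α g (logPotential C (g + (4 + α))) s
      ≤ ∑ i, transProb i s * (logPotential C g s + 3 * ((4 + α) / g) -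
          ((affIncr α i).1 / (g * s.1) + (affIncr α i).2.1 / (g * s.2.1) +
            (affIncr α i).2.2 / (g * s.2.2))) := by
        refine Finset.sum_le_sum fun i _ =>
          mul_le_mul_of_nonneg_left ?_ (transProb_nonneg hs.1 i)
        obtain ⟨hd₁, hd₂, hd₃⟩ := affIncr_bounds hα i
        simp only [logPotential, nextState]
        linarith [hcoord hx hs.2.1 hd₁, hcoord hy hs.2.2.1 hd₂, hcoord hz hs.2.2.2 hd₃]
    _ = logPotential C g s + 3 * ((4 + α) / g) - (s.1 * (4 + α + (2 + α) * (s.2.2 - s.2.1)) /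
          (g * s.1) + s.2.1 * (4 + α + (2 + α) * (s.1 - s.2.2)) / (g * s.2.1) +
          s.2.2 * (4 + α + (2 + α) * (s.2.1 - s.1)) / (g * s.2.2)) := by
        simp only [mul_sub _ (logPotential C g s + _), mul_add _ (_ / _), mul_add _ (_ + _ / _),
          ← mul_div_assoc, Finset.sum_sub_distrib, Finset.sum_add_distrib, ← Finset.sum_mul,
          ← Finset.sum_div, sum_transProb hs.1, h₁, h₂, h₃, one_mul]
    _ = logPotential C g s := by
        field_simp
        ring

theorem logPotential_nonneg {C : ℝ} (hC : 0 ≤ C) (hg : 0 < g) (hs : s ∈ simplex) :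
    0 ≤ logPotential C g s := by
  obtain ⟨⟨hx, hy, hz⟩, hx', hy', hz'⟩ := simplex_subset_Icc hs
  have hcoord {x : ℝ} (hx : 0 ≤ x) (hx' : x ≤ 1) : 0 ≤ C / (g * x) - Real.log x :=
    sub_nonneg.mpr ((Real.log_nonpos hx hx').trans (by positivity))
  exact add_nonneg (add_nonneg (hcoord hx hx') (hcoord hy hy')) (hcoord hz hz')

theorem logPotential_le {C : ℝ} (hC : 0 ≤ C) (hm : 0 < m) (hg : 0 < g)
    (hs : s ∈ weightRegion m g) : logPotential C g s ≤ 3 * (C / m - Real.log (m / g)) := by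
  obtain ⟨-, hx, hy, hz⟩ := hs
  have hcoord {x : ℝ} (hx : m ≤ g * x) : C / (g * x) - Real.log x ≤ C / m - Real.log (m / g) := by
    gcongr
    rwa [div_le_iff₀' hg]
  rw [logPotential]
  linarith [hcoord hx, hcoord hy, hcoord hz]

theorem exp_neg_logPotential_le_coordProd {C : ℝ} (hC : 0 ≤ C) (hm : 0 < m) (hg : 0 < g)
    (hs : s ∈ weightRegion m g) : Real.exp (-logPotential C g s) ≤ coordProd s := by
  obtain ⟨hx, hy, hz⟩ := coord_pos_of_mem_weightRegion hm hg hs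
  rw [coordProd, ← Real.le_log_iff_exp_le (by positivity), Real.log_mul (by positivity) hz.ne',
    Real.log_mul hx.ne' hy.ne', logPotential]
  have h₁ : 0 ≤ C / (g * s.1) := by positivity
  have h₂ : 0 ≤ C / (g * s.2.1) := by positivity
  have h₃ : 0 ≤ C / (g * s.2.2) := by positivity
  linarith

end Dynamics

end RPS

namespace AffRPSChain

open RPS

/-! ### Supermartingales along the chain -/

section Basic

variable {Ω : Type*} [MeasurableSpace Ω] {μ : Measure Ω} {α γ₀ : ℝ} (c : AffRPSChain μ α γ₀)

/-- The state `(X_n, Y_n, Z_n)` of the chain. -/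
def state (n : ℕ) (ω : Ω) : State := (c.X n ω, c.Y n ω, c.Z n ω)

/-- The event that the transition at time `n` is the one with index `i`. -/
def transEvent (n : ℕ) (i : Fin 6) : Set Ω :=
  {ω | c.state (n + 1) ω = nextState α (affGamma γ₀ α n) i (c.state n ω)}

theorem state_mem_simplex (n : ℕ) (ω : Ω) : c.state n ω ∈ simplex :=
  ⟨c.nonneg_X n ω, c.nonneg_Y n ω, c.nonneg_Z n ω, c.sum_eq_one n ω⟩

theorem measurable_state {n k : ℕ} (h : n ≤ k) : Measurable[c.F k] (c.state n) :=
  ((c.adapted_X n).prodMk ((c.adapted_Y n).prodMk (c.adapted_Z n))).mono (c.F.mono h) le_rfl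

theorem measurableSet_transEvent {n k : ℕ} (h : n < k) (i : Fin 6) :
    MeasurableSet[c.F k] (c.transEvent n i) :=
  measurableSet_eq_fun (c.measurable_state h)
    ((continuous_nextState α _ i).measurable.comp (c.measurable_state h.le))

theorem condExp_indicator_transEvent (n : ℕ) (i : Fin 6) :
    μ[(c.transEvent n i).indicator (fun _ => (1 : ℝ)) | c.F n] =ᵐ[μ]
      fun ω => transProb i (c.state n ω) := by
  simpa only [transEvent, state, nextState, transProb, ← affGamma_succ, Prod.mk.injEq]
    using c.step n i

theorem pairwise_disjoint_transEvent (hα : -2 < α) (hγ₀ : 0 < γ₀) (n : ℕ) :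
    Pairwise (Function.onFun Disjoint (c.transEvent n)) := fun _ _ hij =>
  disjoint_left.mpr fun ω hi hj =>
    hij (nextState_injective hα (affGamma_pos hα hγ₀ n) (c.state n ω) (hi.symm.trans hj))

variable [IsProbabilityMeasure μ]

theorem ae_exists_state_succ_eq (hα : -2 < α) (hγ₀ : 0 < γ₀) : ∀ᵐ ω ∂μ, ∀ n,
    ∃ i, c.state (n + 1) ω = nextState α (affGamma γ₀ α n) i (c.state n ω) :=
  ae_all_iff.mpr fun n => ae_exists_mem_of_sum_condExp_eq_one (c.F.le n)
    (fun i => c.F.le _ _ (c.measurableSet_transEvent n.lt_succ_self i))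
    (c.pairwise_disjoint_transEvent hα hγ₀ n) (c.condExp_indicator_transEvent n)
    (.of_forall fun ω => sum_transProb (c.state_mem_simplex n ω))

theorem condExp_state_succ (hα : -2 < α) (hγ₀ : 0 < γ₀) {W : State → State → ℝ} {K : ℝ} {n : ℕ}
    (hW : Measurable (Function.uncurry W))
    (hK : ∀ i, ∀ᵐ ω ∂μ,
      |W (c.state n ω) (nextState α (affGamma γ₀ α n) i (c.state n ω))| ≤ K) :
    μ[fun ω => W (c.state n ω) (c.state (n + 1) ω) | c.F n] =ᵐ[μ]
      fun ω => transOp α (affGamma γ₀ α n) (W (c.state n ω)) (c.state n ω) := by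
  refine condExp_eq_sum_of_eq_on_partition (c.F.le n)
    (fun i => c.F.le _ _ (c.measurableSet_transEvent n.lt_succ_self i))
    (c.pairwise_disjoint_transEvent hα hγ₀ n) (c.condExp_indicator_transEvent n)
    (.of_forall fun ω => sum_transProb (c.state_mem_simplex n ω)) (fun i => ?_) hK fun i ω hω => ?_
  · have hS := c.measurable_state (le_refl n)
    exact (hW.comp (hS.prodMk ((continuous_nextState α _ i).measurable.comp hS))).stronglyMeasurable
  · rw [show c.state (n + 1) ω = _ from hω]

theorem supermartingale_comp_state (hα : -2 < α) (hγ₀ : 0 < γ₀) {V : ℕ → State → ℝ}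
    {R : ℕ → Set State} (hV : ∀ n, Measurable (V n)) (hR : ∀ᵐ ω ∂μ, ∀ n, c.state n ω ∈ R n)
    (hnext : ∀ n, ∀ s ∈ R n, ∀ i, nextState α (affGamma γ₀ α n) i s ∈ R (n + 1))
    (hK : ∀ n, ∃ K, ∀ s ∈ R n, |V n s| ≤ K)
    (hle : ∀ n, ∀ s ∈ R n, transOp α (affGamma γ₀ α n) (V (n + 1)) s ≤ V n s) :
    Supermartingale (fun n ω => V n (c.state n ω)) c.F μ := by
  refine supermartingale_nat
    (fun n => ((hV n).comp (c.measurable_state le_rfl)).stronglyMeasurable) (fun n => ?_)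
    fun n => ?_
  · obtain ⟨K, hK⟩ := hK n
    refine .of_bound ((hV n).comp ((c.measurable_state le_rfl).mono (c.F.le n)
      le_rfl)).aestronglyMeasurable K ?_
    filter_upwards [hR] with ω hω using hK _ (hω n)
  · obtain ⟨K, hK⟩ := hK (n + 1)
    have hcond := c.condExp_state_succ hα hγ₀ (W := fun _ => V (n + 1)) (n := n)
      ((hV (n + 1)).comp measurable_snd)
      fun i => by filter_upwards [hR] with ω hω using hK _ (hnext n _ (hω n) i)
    filter_upwards [hcond, hR] with ω hω hmem
    exact hω.trans_le (hle n _ (hmem n))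

theorem supermartingale_comp_state_of_continuous (hα : -2 < α) (hγ₀ : 0 < γ₀)
    {V : ℕ → State → ℝ} (hV : ∀ n, Continuous (V n))
    (hle : ∀ n, ∀ s ∈ simplex, transOp α (affGamma γ₀ α n) (V (n + 1)) s ≤ V n s) :
    Supermartingale (fun n ω => V n (c.state n ω)) c.F μ :=
  c.supermartingale_comp_state hα hγ₀ (R := fun _ => simplex) (fun n => (hV n).measurable)
    (.of_forall fun ω n => c.state_mem_simplex n ω)
    (fun n _ hs i => nextState_mem_simplex hα (affGamma_pos hα hγ₀ n) hs i)
    (fun n => isCompact_simplex.exists_bound_of_continuousOn (hV n).continuousOn) hle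

theorem exists_ae_mem_weightRegion (hα : -2 < α) (hγ₀ : 0 < γ₀) :
    ∃ m > 0, ∀ᵐ ω ∂μ, ∀ n, c.state n ω ∈ weightRegion m (affGamma γ₀ α n) := by
  obtain ⟨ω₀⟩ : Nonempty Ω := nonempty_of_isProbabilityMeasure μ
  have hx := mul_pos hγ₀ (c.init_X_pos ω₀)
  have hy := mul_pos hγ₀ (c.init_Y_pos ω₀)
  have hz := mul_pos hγ₀ (c.init_Z_pos ω₀)
  refine ⟨min (γ₀ * c.X 0 ω₀) (min (γ₀ * c.Y 0 ω₀) (γ₀ * c.Z 0 ω₀)),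
    lt_min hx (lt_min hy hz), ?_⟩
  filter_upwards [c.ae_exists_state_succ_eq hα hγ₀] with ω hω n
  induction n with
  | zero =>
    refine ⟨c.state_mem_simplex 0 ω, ?_⟩
    simp [state, affGamma, c.init_X_const ω ω₀, c.init_Y_const ω ω₀, c.init_Z_const ω ω₀]
  | succ n ih =>
    obtain ⟨i, hi⟩ := hω n
    rw [hi, affGamma_succ]
    exact nextState_mem_weightRegion hα (affGamma_pos hα hγ₀ n) ih i

end Basic

/-! ### The limit of the product -/

section Limit

variable {Ω : Type*} [MeasurableSpace Ω] {μ : Measure Ω} {α γ₀ : ℝ} (c : AffRPSChain μ α γ₀)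

/-- The limit of `M_n`, as a `limsup` so that it is defined and measurable everywhere. -/
def limitProd (ω : Ω) : ℝ := limsup (fun n => coordProd (c.state n ω)) atTop

/-- The amount by which the limit of `M_n` falls short of its maximal value `1 / 27`. -/
def limitDeficit (ω : Ω) : ℝ := 1 / 27 - c.limitProd ω

theorem measurable_limitDeficit : Measurable[⨆ n, c.F n] c.limitDeficit :=
  measurable_const.sub <| Measurable.limsup fun n =>
    continuous_coordProd.measurable.comp ((c.measurable_state le_rfl).mono (le_iSup c.F n) le_rfl)

theorem limitProd_mem_Icc (ω : Ω) : c.limitProd ω ∈ Icc 0 (1 / 27) := by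
  have h₀ (n : ℕ) : 0 ≤ coordProd (c.state n ω) := coordProd_nonneg (c.state_mem_simplex n ω)
  have h₁ (n : ℕ) : coordProd (c.state n ω) ≤ 1 / 27 := coordProd_le (c.state_mem_simplex n ω)
  exact ⟨le_limsup_of_frequently_le (.of_forall h₀) (isBoundedUnder_of ⟨_, h₁⟩),
    limsup_le_of_le (isBoundedUnder_of ⟨_, h₀⟩).isCoboundedUnder_flip (.of_forall h₁)⟩

theorem limitDeficit_mem_Icc (ω : Ω) : c.limitDeficit ω ∈ Icc 0 (1 / 27) := by
  obtain ⟨h₀, h₁⟩ := c.limitProd_mem_Icc ω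
  exact ⟨sub_nonneg.mpr h₁, sub_le_self _ h₀⟩

variable [IsProbabilityMeasure μ]

theorem integrable_limitDeficit : Integrable c.limitDeficit μ :=
  .of_bound (c.measurable_limitDeficit.mono (iSup_le c.F.le) le_rfl).aestronglyMeasurable (1 / 27)
    (.of_forall fun ω => by
      obtain ⟨h₀, h₁⟩ := c.limitDeficit_mem_Icc ω
      rwa [Real.norm_of_nonneg h₀])

theorem integrable_limitDeficit_sq : Integrable (fun ω => c.limitDeficit ω ^ 2) μ :=
  .of_bound ((c.measurable_limitDeficit.mono (iSup_le c.F.le) le_rfl).pow_const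
    2).aestronglyMeasurable ((1 / 27) ^ 2) (.of_forall fun ω => by
      obtain ⟨h₀, h₁⟩ := c.limitDeficit_mem_Icc ω
      rw [Real.norm_of_nonneg (sq_nonneg _)]
      gcongr)

theorem ae_exists_forall_le_coordProd (hα : -2 < α) (hγ₀ : 0 < γ₀) :
    ∀ᵐ ω ∂μ, ∃ δ > 0, ∀ n, δ ≤ coordProd (c.state n ω) := by
  obtain ⟨m, hm, hreg⟩ := c.exists_ae_mem_weightRegion hα hγ₀
  have hγ := affGamma_pos hα hγ₀
  set C := (4 + α) * (1 + (4 + α) / m) / 2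
  have hC : 0 ≤ C := by
    have hb : 0 < 4 + α := by linarith
    positivity
  have hsuper : Supermartingale
      (fun n ω => logPotential C (affGamma γ₀ α n) (c.state n ω)) c.F μ := by
    refine c.supermartingale_comp_state hα hγ₀ (R := fun n => weightRegion m (affGamma γ₀ α n))
      (fun n => ?_) hreg (fun n s hs i => ?_)
      (fun n => ⟨3 * (C / m - Real.log (m / affGamma γ₀ α n)), fun s hs => ?_⟩) fun n s hs => ?_
    · unfold logPotential; fun_prop
    · rw [affGamma_succ]; exact nextState_mem_weightRegion hα (hγ n) hs i
    · rw [abs_of_nonneg (logPotential_nonneg hC (hγ n) hs.1)]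
      exact logPotential_le hC hm (hγ n) hs
    · rw [affGamma_succ]; exact transOp_logPotential_le hα hm (hγ n) hs
  have hconv := ae_exists_tendsto_of_supermartingale_nonneg hsuper fun n => .of_forall fun ω =>
    logPotential_nonneg hC (hγ n) (c.state_mem_simplex n ω)
  filter_upwards [hconv, hreg] with ω ⟨l, hl⟩ hmem
  obtain ⟨B, hB⟩ := hl.bddAbove_range
  refine ⟨Real.exp (-B), Real.exp_pos _, fun n =>
    le_trans ?_ (exp_neg_logPotential_le_coordProd hC hm (hγ n) (hmem n))⟩
  gcongr
  exact hB ⟨n, rfl⟩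

theorem ae_tendsto_coordProd (hα : -2 < α) (hγ₀ : 0 < γ₀) :
    ∀ᵐ ω ∂μ, Tendsto (fun n => coordProd (c.state n ω)) atTop (𝓝 (c.limitProd ω)) := by
  have hsuper := c.supermartingale_comp_state_of_continuous hα hγ₀ (V := fun _ => coordProd)
    (fun _ => continuous_coordProd)
    fun n s hs => transOp_coordProd_le hα (affGamma_pos hα hγ₀ n) hs
  filter_upwards [ae_exists_tendsto_of_supermartingale_nonneg hsuper fun n => .of_forall fun ω =>
    coordProd_nonneg (c.state_mem_simplex n ω)] with ω ⟨l, hl⟩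
  rwa [limitProd, hl.limsup_eq]

theorem ae_limitProd_pos (hα : -2 < α) (hγ₀ : 0 < γ₀) : ∀ᵐ ω ∂μ, 0 < c.limitProd ω := by
  filter_upwards [c.ae_exists_forall_le_coordProd hα hγ₀, c.ae_tendsto_coordProd hα hγ₀]
    with ω ⟨δ, hδ, hle⟩ hlim
  exact hδ.trans_le (ge_of_tendsto' hlim hle)

theorem exists_le_condExp_limitDeficit (hα : -2 < α) (hγ₀ : 0 < γ₀) :
    ∃ e > 0, ∀ n, ∀ᵐ ω ∂μ, deficit (c.state n ω) +
      e * (1 / affGamma γ₀ α n) * coordProd (c.state n ω) ≤ μ[c.limitDeficit | c.F n] ω := by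
  obtain ⟨e, he, hstep⟩ := exists_transOp_coordProd_mul_le hα hγ₀
  have hγ := affGamma_pos hα hγ₀
  have hbound (n : ℕ) (ω : Ω) :
      |coordProd (c.state n ω) * (1 - e / affGamma γ₀ α n)| ≤ 1 + e / γ₀ := by
    have hM₀ := coordProd_nonneg (c.state_mem_simplex n ω)
    have hM₁ := coordProd_le (c.state_mem_simplex n ω)
    have he₀ : 0 ≤ e / affGamma γ₀ α n := div_nonneg he.le (hγ n).le
    have he₁ : e / affGamma γ₀ α n ≤ e / γ₀ := by gcongr; exact le_affGamma γ₀ hα n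
    rw [abs_mul, abs_of_nonneg hM₀]
    refine (mul_le_of_le_one_left (abs_nonneg _) (by linarith)).trans (abs_le.mpr ?_)
    constructor <;> linarith
  have hsuper := c.supermartingale_comp_state_of_continuous hα hγ₀
    (V := fun n s => coordProd s * (1 - e / affGamma γ₀ α n))
    (fun n => continuous_coordProd.mul_const _) fun n s hs => by
      simpa only [affGamma_succ] using hstep _ (le_affGamma γ₀ hα n) s hs
  have hlim : ∀ᵐ ω ∂μ, Tendsto (fun n => coordProd (c.state n ω) * (1 - e / affGamma γ₀ α n))
      atTop (𝓝 (1 / 27 - c.limitDeficit ω)) := by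
    filter_upwards [c.ae_tendsto_coordProd hα hγ₀] with ω hω
    simpa [limitDeficit] using
      hω.mul (((tendsto_affGamma γ₀ hα).const_div_atTop e).const_sub 1)
  refine ⟨e, he, fun n => ?_⟩
  filter_upwards [condExp_limit_le_of_supermartingale hsuper (fun k => .of_forall (hbound k))
      ((integrable_const _).sub c.integrable_limitDeficit) hlim n,
    condExp_sub (m := c.F n) (integrable_const (1 / 27)) c.integrable_limitDeficit]
    with ω hle hsub
  rw [hsub, Pi.sub_apply, condExp_const (c.F.le n)] at hle
  rw [deficit]
  linear_combination hle

theorem exists_condExp_sq_limitDeficit_le (hα : -2 < α) (hγ₀ : 0 < γ₀) :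
    ∃ C > 0, ∀ n, ∀ᵐ ω ∂μ, μ[fun ω => c.limitDeficit ω ^ 2 | c.F n] ω ≤
      deficit (c.state n ω) ^ 2 + (C * (1 / affGamma γ₀ α n) * deficit (c.state n ω) +
        C * (1 / affGamma γ₀ α n) ^ 2) := by
  obtain ⟨C₁, hC₁, C₂, hC₂, hstep⟩ := exists_transOp_deficit_sq_add_le hα
  have hγ := affGamma_pos hα hγ₀
  have hinv (n : ℕ) : 0 ≤ 1 / affGamma γ₀ α n := (one_div_pos.mpr (hγ n)).le
  set V : ℕ → State → ℝ := fun n s => deficit s ^ 2 +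
    (C₁ * (1 / affGamma γ₀ α n) * deficit s + C₂ * (1 / affGamma γ₀ α n) ^ 2) with hV
  have hV₀ {s : State} (hs : s ∈ simplex) (n : ℕ) : 0 ≤ V n s := by
    have hD := deficit_nonneg hs
    have hn := hinv n
    positivity
  have hV₁ {s : State} (hs : s ∈ simplex) (n : ℕ) :
      V n s ≤ 1 ^ 2 + (C₁ * (1 / γ₀) * 1 + C₂ * (1 / γ₀) ^ 2) := by
    have hD₀ := deficit_nonneg hs
    have hD₁ : deficit s ≤ 1 := (deficit_le hs).trans (by norm_num)
    have hn := hinv n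
    have hle : 1 / affGamma γ₀ α n ≤ 1 / γ₀ := by gcongr; exact le_affGamma γ₀ hα n
    simp only [hV]
    gcongr
  have hcont : Continuous deficit := continuous_const.sub continuous_coordProd
  have hsuper := c.supermartingale_comp_state_of_continuous hα hγ₀ (V := V)
    (fun n => by fun_prop) fun n s hs => by
      simpa only [hV, affGamma_succ] using hstep _ (hγ n) s hs
  have hlim : ∀ᵐ ω ∂μ, Tendsto (fun n => V n (c.state n ω)) atTop (𝓝 (c.limitDeficit ω ^ 2)) := by
    filter_upwards [c.ae_tendsto_coordProd hα hγ₀] with ω hω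
    have hdef : Tendsto (fun n => deficit (c.state n ω)) atTop (𝓝 (c.limitDeficit ω)) :=
      hω.const_sub _
    have hinv := (tendsto_affGamma γ₀ hα).const_div_atTop 1
    simpa [hV] using
      (hdef.pow 2).add (((hinv.const_mul C₁).mul hdef).add ((hinv.pow 2).const_mul C₂))
  refine ⟨C₁ + C₂ + 1, by positivity, fun n => ?_⟩
  filter_upwards [condExp_limit_le_of_supermartingale hsuper (fun k => .of_forall fun ω =>
    (abs_of_nonneg (hV₀ (c.state_mem_simplex k ω) k)).trans_le (hV₁ (c.state_mem_simplex k ω) k))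
    c.integrable_limitDeficit_sq hlim n] with ω hle
  refine hle.trans ?_
  have hD := deficit_nonneg (c.state_mem_simplex n ω)
  have hn := hinv n
  simp only [hV]
  gcongr <;> linarith

theorem ae_limitProd_lt (hα : -2 < α) (hγ₀ : 0 < γ₀) : ∀ᵐ ω ∂μ, c.limitProd ω < 1 / 27 := by
  obtain ⟨e, he, hmean⟩ := c.exists_le_condExp_limitDeficit hα hγ₀
  obtain ⟨C, hC, hsq⟩ := c.exists_condExp_sq_limitDeficit_le hα hγ₀
  have hγ := affGamma_pos hα hγ₀
  have hc : 0 < min (e / 54) 1 := by positivity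
  have hmeas : MeasurableSet[⨆ n, c.F n] {ω | 0 < c.limitDeficit ω} :=
    measurableSet_lt measurable_const c.measurable_limitDeficit
  have hcond (n : ℕ) : ∀ᵐ ω ∂μ, 1 / 54 ≤ coordProd (c.state n ω) →
      min (e / 54) 1 ^ 2 / (1 + C) ≤
        μ[{ω | 0 < c.limitDeficit ω}.indicator (fun _ => (1 : ℝ)) | c.F n] ω := by
    have hinv := one_div_pos.mpr (hγ n)
    have hD (ω : Ω) := deficit_nonneg (c.state_mem_simplex n ω)
    have hh : StronglyMeasurable[c.F n]
        fun ω => deficit (c.state n ω) + 1 / affGamma γ₀ α n :=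
      Measurable.stronglyMeasurable <| (measurable_const.sub
        (continuous_coordProd.measurable.comp (c.measurable_state le_rfl))).add_const _
    filter_upwards [hmean n, hsq n, sq_div_le_condExp_indicator_pos (K := 1 + C) (c.F.le n)
      (c.measurable_limitDeficit.mono (iSup_le c.F.le) le_rfl)
      (.of_forall fun ω => (c.limitDeficit_mem_Icc ω).1) c.integrable_limitDeficit
      c.integrable_limitDeficit_sq hh hinv (fun ω => le_add_of_nonneg_left (hD ω)) hc.le
      (by positivity)] with ω hmean hsq hind hM
    refine hind (le_trans ?_ hmean) (hsq.trans ?_)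
    · have h₁ : min (e / 54) 1 * deficit (c.state n ω) ≤ deficit (c.state n ω) :=
        mul_le_of_le_one_left (hD ω) (min_le_right _ _)
      have h₂ : min (e / 54) 1 ≤ e * coordProd (c.state n ω) :=
        (min_le_left _ _).trans (by rw [div_eq_mul_one_div]; gcongr)
      nlinarith
    · nlinarith [mul_nonneg hinv.le (hD ω), mul_nonneg hC.le (sq_nonneg (deficit (c.state n ω))),
        mul_nonneg hC.le (mul_nonneg hinv.le (hD ω))]
  filter_upwards [ae_mem_of_eventually_le_condExp_indicator (F := c.F) hmeas
    (ε := min (e / 54) 1 ^ 2 / (1 + C)) (by positivity), ae_all_iff.mpr hcond,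
    c.ae_tendsto_coordProd hα hγ₀] with ω hmem hcond hlim
  by_contra! hge
  have hbig : ∀ᶠ n in atTop, 1 / 54 ≤ coordProd (c.state n ω) :=
    (hlim.eventually_const_lt (show 1 / 54 < c.limitProd ω by linarith)).mono fun _ => le_of_lt
  have hpos : 0 < c.limitDeficit ω := hmem (hbig.mono hcond)
  rw [limitDeficit] at hpos
  linarith

end Limit

end AffRPSChain

namespace RPS

/-! ### Cluster points -/

section ClusterPoints

variable {α g γ₀ δ m M l : ℝ} {s : State} {u : ℕ → State}

/-- The difference between the increment `cross s t / sqDev s` of the angle and its mean, when the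
total weight before the transition is `g`. The denominator is bounded below by `δ`, so that the
noise is small also near the barycentre. -/
def angularNoise (α δ g : ℝ) (s t : State) : ℝ :=
  (cross s t - (2 + α) * angularDrift s / (g + (4 + α))) / max (sqDev s) δ

theorem measurable_uncurry_angularNoise (α δ g : ℝ) :
    Measurable (Function.uncurry (angularNoise α δ g)) := by
  unfold Function.uncurry angularNoise cross angularDrift sqDev
  fun_prop

theorem abs_angularNoise_nextState_le (hα : -2 < α) (hg : 0 < g) (hδ : 0 < δ) (hs : s ∈ simplex)
    (i : Fin 6) : |angularNoise α δ g s (nextState α g i s)| ≤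
      (3 * (4 + α) + (2 + α)) / δ / (g + (4 + α)) := by
  have h₂ : 0 < 2 + α := by linarith
  have hg' : 0 < g + (4 + α) := by linarith
  have hcross : |cross s (nextState α g i s)| ≤ 3 * ((4 + α) / (g + (4 + α))) :=
    (abs_cross_le hs _).trans (by gcongr; exact norm_nextState_sub_le hα hg hs i)
  have hdrift : |(2 + α) * angularDrift s / (g + (4 + α))| ≤ (2 + α) / (g + (4 + α)) := by
    rw [abs_of_nonneg (div_nonneg (mul_nonneg h₂.le (angularDrift_nonneg hs)) hg'.le)]
    gcongr
    exact mul_le_of_le_one_right h₂.le (angularDrift_le_one hs)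
  have htotal := (abs_sub _ _).trans (add_le_add hcross hdrift)
  rw [angularNoise, abs_div, abs_of_pos (lt_max_of_lt_right hδ)]
  calc _ ≤ (3 * ((4 + α) / (g + (4 + α))) + (2 + α) / (g + (4 + α))) / δ :=
        div_le_div₀ ((abs_nonneg _).trans htotal) htotal hδ (le_max_right _ _)
    _ = (3 * (4 + α) + (2 + α)) / δ / (g + (4 + α)) := by ring

theorem transOp_angularNoise (δ : ℝ) (hα : -2 < α) (hg : 0 < g) (hs : s ∈ simplex) :
    transOp α g (angularNoise α δ g s) s = 0 := by
  have hlin : angularNoise α δ g s = fun t => (max (sqDev s) δ)⁻¹ * cross s t +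
      -((max (sqDev s) δ)⁻¹ * ((2 + α) * angularDrift s / (g + (4 + α)))) := by
    funext t
    rw [angularNoise]
    ring
  rw [hlin, transOp_const_mul_add_const α g _ hs, transOp_cross hα hg hs, add_neg_cancel]

theorem affGamma_add (γ₀ α : ℝ) (k n : ℕ) :
    affGamma γ₀ α (k + n) = affGamma (affGamma γ₀ α k) α n := by
  simp only [affGamma, Nat.cast_add]
  ring

theorem eventually_le_sqDev_of_tendsto_coordProd (hu : ∀ n, u n ∈ simplex)
    (hM : Tendsto (fun n => coordProd (u n)) atTop (𝓝 M)) (hMδ : 7 * δ < 1 - 27 * M) :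
    ∀ᶠ n in atTop, δ ≤ sqDev (u n) := by
  filter_upwards [hM.eventually_lt_const (show M < (1 - 7 * δ) / 27 by linarith)] with n hn
  linarith [one_sub_coordProd_le_sqDev (hu n)]

/-- The drift of the angle is at least a constant times `1 / γ_n`, whose sum diverges, so it
overcomes any convergent noise. -/
theorem tendsto_sum_cross_atTop_of_tendsto_sum_angularNoise (hα : -2 < α) (hγ₀ : 0 < γ₀)
    (hu : ∀ n, u n ∈ simplex) (hm : 0 < m) (hum : ∀ n, m ≤ coordProd (u n)) (hδ : 0 < δ)
    (hdev : ∀ n, δ ≤ sqDev (u n))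
    (hnoise : Tendsto (fun n => ∑ k ∈ Finset.range n,
      angularNoise α δ (affGamma γ₀ α k) (u k) (u (k + 1))) atTop (𝓝 l)) :
    Tendsto (fun n => ∑ k ∈ Finset.range n, cross (u k) (u (k + 1)) / sqDev (u k))
      atTop atTop := by
  have h₂ : 0 < 2 + α := by linarith
  have hdrift (k : ℕ) : angularNoise α δ (affGamma γ₀ α k) (u k) (u (k + 1)) +
      2 * (2 + α) * m * (1 / affGamma γ₀ α (k + 1)) ≤ cross (u k) (u (k + 1)) / sqDev (u k) := by
    have hV : 0 < sqDev (u k) := hδ.trans_le (hdev k)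
    have hγ := affGamma_pos hα hγ₀ (k + 1)
    have hle : 2 * (2 + α) * m * (1 / affGamma γ₀ α (k + 1)) ≤
        (2 + α) * angularDrift (u k) / affGamma γ₀ α (k + 1) / sqDev (u k) :=
      calc 2 * (2 + α) * m * (1 / affGamma γ₀ α (k + 1))
          = (2 + α) * (2 * m * sqDev (u k)) / affGamma γ₀ α (k + 1) / sqDev (u k) := by field_simp
        _ ≤ _ := by
          gcongr
          refine le_trans ?_ (coordProd_mul_sqDev_le_angularDrift (hu k))
          gcongr
          exact hum k
    rw [angularNoise, max_eq_left (hdev k), ← affGamma_succ, sub_div]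
    linarith
  refine tendsto_atTop_mono (fun n => ?_) (hnoise.add_atTop
    ((tendsto_sum_one_div_affGamma hα hγ₀).const_mul_atTop (by positivity : 0 < 2 * (2 + α) * m)))
  rw [Finset.mul_sum, ← Finset.sum_add_distrib]
  exact Finset.sum_le_sum fun k _ => hdrift k

theorem mapClusterPt_of_tendsto_sum_angularNoise (hα : -2 < α) (hγ₀ : 0 < γ₀)
    (hu : ∀ n, u n ∈ simplex)
    (hnext : ∀ n, ∃ i, u (n + 1) = nextState α (affGamma γ₀ α n) i (u n)) (hm : 0 < m)
    (hum : ∀ n, m ≤ coordProd (u n)) (hM : Tendsto (fun n => coordProd (u n)) atTop (𝓝 M))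
    (hδ : 0 < δ) (hMδ : 7 * δ < 1 - 27 * M)
    (hnoise : Tendsto (fun n => ∑ k ∈ Finset.range n,
      angularNoise α δ (affGamma γ₀ α k) (u k) (u (k + 1))) atTop (𝓝 l))
    {p : State} (hp : p ∈ simplex) (hpM : coordProd p = M) : MapClusterPt p atTop u := by
  obtain ⟨N, hN⟩ := eventually_atTop.mp (eventually_le_sqDev_of_tendsto_coordProd hu hM hMδ)
  have hshift : Tendsto (fun n => N + n) atTop atTop :=
    tendsto_atTop_mono (fun n => n.le_add_left N) tendsto_id
  have hγN := affGamma_pos hα hγ₀ N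
  have hnoiseN : Tendsto (fun n => ∑ k ∈ Finset.range n,
      angularNoise α δ (affGamma (affGamma γ₀ α N) α k) (u (N + k)) (u (N + (k + 1)))) atTop
      (𝓝 (l - ∑ k ∈ Finset.range N,
        angularNoise α δ (affGamma γ₀ α k) (u k) (u (k + 1)))) := by
    refine ((hnoise.comp hshift).sub_const _).congr fun n => ?_
    simp only [Function.comp_apply, Finset.sum_range_add, add_sub_cancel_left, affGamma_add,
      add_assoc]
  have hcross := tendsto_sum_cross_atTop_of_tendsto_sum_angularNoise (u := fun n => u (N + n)) hα
    hγN (fun n => hu _) hm (fun n => hum _) hδ (fun n => hN _ (N.le_add_right n)) hnoiseN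
  have hstep (n : ℕ) : ‖u (N + (n + 1)) - u (N + n)‖ ≤
      (4 + α) / affGamma (affGamma γ₀ α N) α (n + 1) := by
    obtain ⟨i, hi⟩ := hnext (N + n)
    rw [← add_assoc, hi, affGamma_succ, ← affGamma_add]
    exact norm_nextState_sub_le hα (affGamma_pos hα hγ₀ _) (hu _) i
  refine MapClusterPt.of_comp hshift (mapClusterPt_of_tendsto_sum_cross (fun n => hu _)
    (hpM ▸ hM.comp hshift) hp ?_ ?_ hδ (fun n => hN _ (N.le_add_right n)) hstep
    (summable_sq_div_affGamma hα hγN (4 + α)) hcross)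
  · exact hpM ▸ hm.trans_le (ge_of_tendsto' hM hum)
  · linarith

theorem mem_simplex_and_coordProd_eq_of_mapClusterPt (hu : ∀ n, u n ∈ simplex)
    (hM : Tendsto (fun n => coordProd (u n)) atTop (𝓝 M)) {p : State}
    (hp : MapClusterPt p atTop u) : p ∈ simplex ∧ coordProd p = M := by
  have hprod : MapClusterPt (coordProd p) atTop (coordProd ∘ u) :=
    hp.continuousAt_comp continuous_coordProd.continuousAt
  exact ⟨isClosed_simplex.mem_of_mapClusterPt hp (.of_forall hu),
    eq_of_nhds_neBot (ClusterPt.mono hprod hM)⟩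

/-- A limit would be fixed by the cyclic rotation of the coordinates, hence be the barycentre. -/
theorem not_tendsto_of_forall_mapClusterPt (hM : M < 1 / 27)
    (h : ∀ p, MapClusterPt p atTop u ↔ p ∈ simplex ∧ coordProd p = M) :
    ¬ ∃ p, Tendsto u atTop (𝓝 p) := by
  rintro ⟨⟨x, y, z⟩, hp⟩
  obtain ⟨⟨hx, hy, hz, hsum⟩, hprod⟩ := (h _).mp hp.mapClusterPt
  have hrot : MapClusterPt (y, z, x) atTop u := by
    refine (h _).mpr ⟨⟨hy, hz, hx, by linarith⟩, hprod ▸ ?_⟩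
    simp only [coordProd]
    ring
  obtain ⟨rfl, rfl, -⟩ : y = x ∧ z = y ∧ x = z := by
    simpa only [Prod.mk.injEq] using eq_of_nhds_neBot (ClusterPt.mono hrot hp)
  obtain rfl : z = 1 / 3 := by linarith
  norm_num [coordProd] at hprod
  linarith

end ClusterPoints

end RPS

namespace AffRPSChain

open RPS

section ClusterPoints

variable {Ω : Type*} [MeasurableSpace Ω] {μ : Measure Ω} [IsProbabilityMeasure μ] {α γ₀ : ℝ}
  (c : AffRPSChain μ α γ₀)

theorem ae_exists_tendsto_sum_angularNoise (hα : -2 < α) (hγ₀ : 0 < γ₀) {δ : ℝ} (hδ : 0 < δ) :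
    ∀ᵐ ω ∂μ, ∃ l, Tendsto (fun n => ∑ k ∈ Finset.range n, angularNoise α δ (affGamma γ₀ α k)
      (c.state k ω) (c.state (k + 1) ω)) atTop (𝓝 l) := by
  have hbound (k : ℕ) (i : Fin 6) (ω : Ω) : |angularNoise α δ (affGamma γ₀ α k) (c.state k ω)
      (nextState α (affGamma γ₀ α k) i (c.state k ω))| ≤
        (3 * (4 + α) + (2 + α)) / δ / affGamma γ₀ α (k + 1) := by
    rw [affGamma_succ]
    exact abs_angularNoise_nextState_le hα (affGamma_pos hα hγ₀ k) hδ (c.state_mem_simplex k ω) i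
  have hmeas (k : ℕ) := measurable_uncurry_angularNoise α δ (affGamma γ₀ α k)
  refine ae_exists_tendsto_sum_of_condExp_eq_zero (F := c.F)
    (fun k => ((hmeas k).comp ((c.measurable_state k.le_succ).prodMk
      (c.measurable_state le_rfl))).stronglyMeasurable) (fun k => ?_) (fun k => ?_)
    (summable_sq_div_affGamma hα hγ₀ ((3 * (4 + α) + (2 + α)) / δ))
  · filter_upwards [c.ae_exists_state_succ_eq hα hγ₀] with ω hω
    obtain ⟨i, hi⟩ := hω k
    simpa only [Function.comp_apply, Function.uncurry_apply_pair, hi] using hbound k i ω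
  · filter_upwards [c.condExp_state_succ hα hγ₀ (hmeas k) fun i => .of_forall (hbound k i)]
      with ω hω
    exact hω.trans
      (transOp_angularNoise δ hα (affGamma_pos hα hγ₀ k) (c.state_mem_simplex k ω))

theorem ae_forall_mapClusterPt_iff (hα : -2 < α) (hγ₀ : 0 < γ₀) :
    ∀ᵐ ω ∂μ, ∀ p, MapClusterPt p atTop (fun n => c.state n ω) ↔
      p ∈ simplex ∧ coordProd p = c.limitProd ω := by
  have hnoise := ae_all_iff.mpr fun j : ℕ =>
    c.ae_exists_tendsto_sum_angularNoise hα hγ₀ (Nat.one_div_pos_of_nat (α := ℝ) (n := j))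
  filter_upwards [c.ae_tendsto_coordProd hα hγ₀, c.ae_limitProd_lt hα hγ₀,
    c.ae_exists_forall_le_coordProd hα hγ₀, c.ae_exists_state_succ_eq hα hγ₀, hnoise]
    with ω hM hlt ⟨m, hm, hum⟩ hnext hnoise p
  have hu (n : ℕ) := c.state_mem_simplex n ω
  refine ⟨mem_simplex_and_coordProd_eq_of_mapClusterPt hu hM, fun ⟨hp, hpM⟩ => ?_⟩
  obtain ⟨j, hj⟩ := exists_nat_one_div_lt (show 0 < (1 - 27 * c.limitProd ω) / 7 by linarith)
  obtain ⟨l, hl⟩ := hnoise j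
  exact mapClusterPt_of_tendsto_sum_angularNoise hα hγ₀ hu hnext hm hum hM
    Nat.one_div_pos_of_nat (by linarith) hl hp hpM

end ClusterPoints

end AffRPSChain

namespace RPS

/-! ### Prescribed words of transitions -/

section Blocks

variable {α g γ₀ : ℝ} {s : State}

theorem smul_nextState (hg : g + (4 + α) ≠ 0) (i : Fin 6) (s : State) :
    (g + (4 + α)) • nextState α g i s = g • s + affIncr α i := by
  ext <;> simp only [nextState, Prod.smul_mk, Prod.fst_add, Prod.snd_add, Prod.smul_fst,
    Prod.smul_snd, smul_eq_mul] <;> field_simp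

/-- The word in the transitions `0`, `1`, `2` (two draws of the same type) that starts with `i`
letters `0`, followed by `j` letters `1`, followed by letters `2`. -/
def blockWord (i j k : ℕ) : Fin 6 := if k < i then 0 else if k < i + j then 1 else 2

/-- The state reached from `s` along the first `n` letters of `blockWord i j`, when `i + j ≤ n` and
the initial total weight is `γ₀`. -/
def blockState (γ₀ α : ℝ) (s : State) (i j n : ℕ) : State :=
  (affGamma γ₀ α n)⁻¹ • (γ₀ • s + (4 + α) • ((i, j, n - i - j) : State))

theorem sum_affIncr_blockWord (α : ℝ) {i j n : ℕ} (h : i + j ≤ n) :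
    ∑ k ∈ Finset.range n, affIncr α (blockWord i j k) =
      (4 + α) • ((i, j, n - i - j) : State) := by
  obtain ⟨l, rfl⟩ := Nat.exists_eq_add_of_le h
  have h₀ : ∀ k ∈ Finset.range i, affIncr α (blockWord i j k) = affIncr α 0 := fun k hk => by
    simp [blockWord, Finset.mem_range.mp hk]
  have h₁ : ∀ k ∈ Finset.range j, affIncr α (blockWord i j (i + k)) = affIncr α 1 := fun k hk => by
    simp [blockWord, Finset.mem_range.mp hk]
  have h₂ : ∀ k ∈ Finset.range l, affIncr α (blockWord i j (i + j + k)) = affIncr α 2 :=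
    fun k _ => by simp [blockWord, add_assoc]
  rw [Finset.sum_range_add, Finset.sum_range_add, Finset.sum_congr rfl h₀, Finset.sum_congr rfl h₁,
    Finset.sum_congr rfl h₂]
  ext <;> simp [affIncr] <;> ring

theorem tendsto_blockState (hα : -2 < α) (γ₀ : ℝ) (s : State) {p : State} (hp : p ∈ simplex) :
    Tendsto (fun n : ℕ => blockState γ₀ α s ⌊p.1 * n⌋₊ ⌊p.2.1 * n⌋₊ n) atTop (𝓝 p) := by
  have hb : 4 + α ≠ 0 := by linarith
  have hfloor {x : ℝ} (hx : 0 ≤ x) : Tendsto (fun n : ℕ => (⌊x * n⌋₊ : ℝ) / n) atTop (𝓝 x) :=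
    (tendsto_nat_floor_mul_div_atTop hx).comp tendsto_natCast_atTop_atTop
  have hconst (a : ℝ) := tendsto_const_div_atTop_nhds_zero_nat a
  obtain ⟨hx, hy, -, hsum⟩ := hp
  have hγ : Tendsto (fun n : ℕ => γ₀ / (n : ℝ) + (4 + α)) atTop (𝓝 (4 + α)) := by
    simpa only [zero_add] using (hconst γ₀).add_const (4 + α)
  have hstart : Tendsto (fun n : ℕ => (γ₀ / (n : ℝ)) • s) atTop (𝓝 0) := by
    simpa only [zero_smul] using (hconst γ₀).smul_const s
  have hblocks := ((hfloor hx).prodMk_nhds ((hfloor hy).prodMk_nhds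
    (((hfloor hx).const_sub 1).sub (hfloor hy)))).const_smul (4 + α)
  have hlim := (hγ.inv₀ hb).smul (hstart.add hblocks)
  rw [zero_add, inv_smul_smul₀ hb, show (p.1, p.2.1, 1 - p.1 - p.2.1) = p by
    ext <;> simp only; linarith] at hlim
  refine hlim.congr' ?_
  filter_upwards [eventually_ne_atTop 0] with n hn
  have hn' : (n : ℝ) ≠ 0 := Nat.cast_ne_zero.mpr hn
  ext <;> simp only [blockState, affGamma, Prod.smul_mk, Prod.fst_add, Prod.snd_add,
    Prod.smul_fst, Prod.smul_snd, smul_eq_mul] <;> field_simp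

theorem floor_add_floor_le {p : State} (hp : p ∈ simplex) (n : ℕ) :
    ⌊p.1 * n⌋₊ + ⌊p.2.1 * n⌋₊ ≤ n := by
  obtain ⟨hx, hy, hz, hsum⟩ := hp
  have hn : (0 : ℝ) ≤ n := n.cast_nonneg
  have hle : (⌊p.1 * n⌋₊ + ⌊p.2.1 * n⌋₊ : ℝ) ≤ n :=
    calc (⌊p.1 * n⌋₊ + ⌊p.2.1 * n⌋₊ : ℝ) ≤ p.1 * n + p.2.1 * n :=
          add_le_add (Nat.floor_le (mul_nonneg hx hn)) (Nat.floor_le (mul_nonneg hy hn))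
      _ = (p.1 + p.2.1) * n := (add_mul _ _ _).symm
      _ ≤ n := mul_le_of_le_one_left hn (by linarith)
  exact_mod_cast hle

theorem exists_mem_simplex_coordProd_eq {M : ℝ} (hM : M ∈ Icc 0 (1 / 27)) :
    ∃ p ∈ simplex, coordProd p = M := by
  have hcont : ContinuousOn (fun t : ℝ => coordProd (t, t, 1 - 2 * t)) (Icc 0 (1 / 3)) := by
    unfold coordProd
    fun_prop
  have hIcc : M ∈ Icc (coordProd (0, 0, 1 - 2 * 0))
      (coordProd (1 / 3, 1 / 3, 1 - 2 * (1 / 3))) := by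
    norm_num [coordProd] at hM ⊢
    exact hM
  obtain ⟨t, ⟨ht₀, ht₁⟩, ht⟩ := intermediate_value_Icc (by norm_num) hcont hIcc
  exact ⟨_, ⟨ht₀, ht₀, by linarith, by ring⟩, ht⟩

end Blocks

end RPS

namespace AffRPSChain

open RPS

section LimitLaw

variable {Ω : Type*} [MeasurableSpace Ω] {μ : Measure Ω} {α γ₀ : ℝ} (c : AffRPSChain μ α γ₀)

/-- The event that the first `n` transitions are the first `n` letters of the word `w`. -/
def cylinder (w : ℕ → Fin 6) (n : ℕ) : Set Ω := {ω | ∀ k < n, ω ∈ c.transEvent k (w k)}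

theorem cylinder_zero (w : ℕ → Fin 6) : c.cylinder w 0 = univ := by simp [cylinder]

theorem cylinder_succ (w : ℕ → Fin 6) (n : ℕ) :
    c.cylinder w (n + 1) = c.cylinder w n ∩ c.transEvent n (w n) := by
  ext ω
  exact Nat.forall_lt_succ_right

theorem measurableSet_cylinder (w : ℕ → Fin 6) (n : ℕ) :
    MeasurableSet[c.F n] (c.cylinder w n) := by
  simp only [cylinder, ofPred_forall]
  exact .iInter fun k => .iInter fun hk => c.measurableSet_transEvent hk (w k)

theorem affGamma_smul_state_of_mem_cylinder (hα : -2 < α) (hγ₀ : 0 < γ₀) {w : ℕ → Fin 6} {n : ℕ}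
    {ω : Ω} (hω : ω ∈ c.cylinder w n) : affGamma γ₀ α n • c.state n ω =
      γ₀ • c.state 0 ω + ∑ k ∈ Finset.range n, affIncr α (w k) := by
  induction n with
  | zero => simp [affGamma]
  | succ n ih =>
    rw [cylinder_succ] at hω
    have hγ : affGamma γ₀ α n + (4 + α) ≠ 0 := affGamma_succ γ₀ α n ▸ (affGamma_pos hα hγ₀ _).ne'
    rw [show c.state (n + 1) ω = _ from hω.2, affGamma_succ, smul_nextState hγ, ih hω.1,
      Finset.sum_range_succ, add_assoc]

theorem state_eq_blockState (hα : -2 < α) (hγ₀ : 0 < γ₀) {i j n : ℕ} (hn : i + j ≤ n) {ω : Ω}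
    (hω : ω ∈ c.cylinder (blockWord i j) n) :
    c.state n ω = blockState γ₀ α (c.state 0 ω) i j n := by
  rw [blockState, eq_inv_smul_iff₀ (affGamma_pos hα hγ₀ _).ne',
    c.affGamma_smul_state_of_mem_cylinder hα hγ₀ hω, sum_affIncr_blockWord α hn]

variable [IsProbabilityMeasure μ]

theorem measure_cylinder_pos (hα : -2 < α) (hγ₀ : 0 < γ₀) (w : ℕ → Fin 6) (n : ℕ) :
    0 < μ (c.cylinder w n) := by
  obtain ⟨m, hm, hreg⟩ := c.exists_ae_mem_weightRegion hα hγ₀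
  induction n with
  | zero => simp [cylinder_zero]
  | succ n ih =>
    rw [cylinder_succ]
    refine measure_inter_pos_of_condExp_indicator_pos (c.measurableSet_cylinder w n)
      (c.F.le _ _ (c.measurableSet_transEvent n.lt_succ_self _)) ih ?_
    filter_upwards [c.condExp_indicator_transEvent n (w n), hreg] with ω hω hmem
    rw [hω]
    exact transProb_pos (coord_pos_of_mem_weightRegion hm (affGamma_pos hα hγ₀ n) (hmem n)) _

theorem exists_measurableSet_state_eq (hα : -2 < α) (hγ₀ : 0 < γ₀) {p : State} (hp : p ∈ simplex)
    {U : Set State} (hU : U ∈ 𝓝 p) (B : ℝ) : ∃ n, B ≤ affGamma γ₀ α n ∧ ∃ s ∈ U, ∃ A,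
      MeasurableSet[c.F n] A ∧ 0 < μ A ∧ ∀ ω ∈ A, c.state n ω = s := by
  obtain ⟨ω₀⟩ : Nonempty Ω := nonempty_of_isProbabilityMeasure μ
  have hinit (ω : Ω) : c.state 0 ω = c.state 0 ω₀ := by
    simp only [state, c.init_X_const ω ω₀, c.init_Y_const ω ω₀, c.init_Z_const ω ω₀]
  obtain ⟨n, hnB, hnU⟩ := (((tendsto_affGamma γ₀ hα).eventually_ge_atTop B).and
    ((tendsto_blockState hα γ₀ (c.state 0 ω₀) hp).eventually hU)).exists
  refine ⟨n, hnB, _, hnU, c.cylinder (blockWord ⌊p.1 * n⌋₊ ⌊p.2.1 * n⌋₊) n,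
    c.measurableSet_cylinder _ n, c.measure_cylinder_pos hα hγ₀ _ n, fun ω hω => ?_⟩
  rw [c.state_eq_blockState hα hγ₀ (floor_add_floor_le hp n) hω, hinit]

theorem measure_limitProd_mem_Ioo_pos (hα : -2 < α) (hγ₀ : 0 < γ₀) {a b : ℝ} (ha : 0 ≤ a)
    (hab : a < b) (hb : b ≤ 1 / 27) : 0 < μ {ω | c.limitProd ω ∈ Ioo a b} := by
  obtain ⟨e, he, hmean⟩ := c.exists_le_condExp_limitDeficit hα hγ₀
  obtain ⟨C, hC, hsq⟩ := c.exists_condExp_sq_limitDeficit_le hα hγ₀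
  set δ := (b - a) / 4 with hδ_def
  have hδ : 0 < δ := by linarith
  obtain ⟨p, hp, hpM⟩ := exists_mem_simplex_coordProd_eq (M := (a + b) / 2)
    ⟨by linarith, by linarith⟩
  have hU : {s | |coordProd s - (a + b) / 2| < δ} ∈ 𝓝 p := by
    refine (continuous_coordProd.sub continuous_const).abs.continuousAt.eventually_lt_const ?_
    simpa only [Pi.sub_apply, hpM, sub_self, abs_zero] using hδ
  obtain ⟨n, hn, s, hs, A, hA, hμA, hAs⟩ :=
    c.exists_measurableSet_state_eq hα hγ₀ hp hU (max 1 (2 * C / δ ^ 2))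
  obtain ⟨ω₁, hω₁⟩ := nonempty_of_measure_ne_zero hμA.ne'
  have hs_mem : s ∈ simplex := hAs ω₁ hω₁ ▸ c.state_mem_simplex n ω₁
  have hvar : C * (1 / affGamma γ₀ α n) * deficit s + C * (1 / affGamma γ₀ α n) ^ 2 < δ ^ 2 := by
    have hγ : 1 ≤ affGamma γ₀ α n := (le_max_left _ _).trans hn
    have hγC : 2 * C ≤ δ ^ 2 * affGamma γ₀ α n :=
      (div_le_iff₀' (by positivity)).mp ((le_max_right _ _).trans hn)
    have hr : 1 / affGamma γ₀ α n ≤ 1 := div_le_one_of_le₀ hγ (zero_le_one.trans hγ)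
    calc _ ≤ C * (1 / affGamma γ₀ α n) * (1 / 27) + C * (1 / affGamma γ₀ α n) := by
          gcongr
          · exact deficit_le hs_mem
          · exact pow_le_of_le_one (by positivity) hr two_ne_zero
      _ < 2 * C / affGamma γ₀ α n := by ring_nf; gcongr; norm_num
      _ ≤ δ ^ 2 := div_le_of_le_mul₀ (by linarith) (sq_nonneg δ) hγC
  refine (measure_inter_abs_sub_lt_pos (c.F.le n) hA hμA.ne' c.integrable_limitDeficit
    c.integrable_limitDeficit_sq (deficit_nonneg hs_mem) ?_ ?_ hvar hδ.le).trans_le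
    (measure_mono ?_)
  · filter_upwards [hmean n] with ω hω hωA
    rw [hAs ω hωA] at hω
    have hdrop : 0 ≤ e * (1 / affGamma γ₀ α n) * coordProd s :=
      mul_nonneg (mul_nonneg he.le (one_div_nonneg.mpr (affGamma_pos hα hγ₀ n).le))
        (coordProd_nonneg hs_mem)
    linarith
  · filter_upwards [hsq n] with ω hω hωA
    rwa [hAs ω hωA] at hω
  · rintro ω ⟨-, hω⟩
    simp only [mem_ofPred_eq, limitDeficit, deficit, abs_lt] at hs hω
    exact ⟨by linarith, by linarith⟩

end LimitLaw

end AffRPSChain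

open RPS in
theorem affine_rps_main_general
    {Ω : Type*} [MeasurableSpace Ω] (μ : Measure Ω) [IsProbabilityMeasure μ]
    (α γ₀ : ℝ) (hα : -2 < α) (hγ₀ : 0 < γ₀) (c : AffRPSChain μ α γ₀) :
    (∀ᵐ ω ∂μ, ∃ M : ℝ, M ∈ Set.Ioo (0 : ℝ) (1/27) ∧
      Tendsto (fun n => c.X n ω * c.Y n ω * c.Z n ω) atTop (𝓝 M) ∧
      (¬ ∃ p : ℝ × ℝ × ℝ, Tendsto (fun n => (c.X n ω, c.Y n ω, c.Z n ω)) atTop (𝓝 p)) ∧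
      (∀ p : ℝ × ℝ × ℝ,
        MapClusterPt p atTop (fun n => (c.X n ω, c.Y n ω, c.Z n ω)) ↔
          (0 ≤ p.1 ∧ 0 ≤ p.2.1 ∧ 0 ≤ p.2.2 ∧ p.1 + p.2.1 + p.2.2 = 1 ∧
            p.1 * p.2.1 * p.2.2 = M))) ∧
    (∀ a b : ℝ, 0 ≤ a → a < b → b ≤ 1/27 →
      0 < μ {ω | ∃ M ∈ Set.Ioo a b,
        Tendsto (fun n => c.X n ω * c.Y n ω * c.Z n ω) atTop (𝓝 M)}) := by
  refine ⟨?_, fun a b ha hab hb => ?_⟩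
  · filter_upwards [c.ae_tendsto_coordProd hα hγ₀, c.ae_limitProd_pos hα hγ₀,
      c.ae_limitProd_lt hα hγ₀, c.ae_forall_mapClusterPt_iff hα hγ₀] with ω hM hpos hlt hcl
    refine ⟨c.limitProd ω, ⟨hpos, hlt⟩, hM, not_tendsto_of_forall_mapClusterPt hlt hcl,
      fun p => (hcl p).trans ?_⟩
    simp only [simplex, mem_ofPred_eq, and_assoc, coordProd]
  · refine (c.measure_limitProd_mem_Ioo_pos hα hγ₀ ha hab hb).trans_le (measure_mono_ae ?_)
    filter_upwards [c.ae_tendsto_coordProd hα hγ₀] with ω hM hab using ⟨_, hab, hM⟩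

/-- In the affine rock–paper–scissors chain with `α > -2`: almost surely
`M_n = X_n Y_n Z_n` converges to a limit `M ∈ [0, 1/27)`, the sequence `(X_n, Y_n, Z_n)`
does not converge and its set of cluster points is exactly `{(x,y,z) ∈ Δ² : xyz = M}`;
moreover the law of `M` gives positive probability to every nonempty open subinterval of
`(0, 1/27)`. -/
theorem affine_rps_main
    {Ω : Type*} [MeasurableSpace Ω] (μ : Measure Ω) [IsProbabilityMeasure μ]
    (α γ₀ : ℝ) (hα : -2 < α) (hγ₀ : 2 ≤ γ₀) (c : AffRPSChain μ α γ₀) :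
    (∀ᵐ ω ∂μ, ∃ M : ℝ, M ∈ Set.Ico (0 : ℝ) (1/27) ∧
      Tendsto (fun n => c.X n ω * c.Y n ω * c.Z n ω) atTop (𝓝 M) ∧
      (¬ ∃ p : ℝ × ℝ × ℝ, Tendsto (fun n => (c.X n ω, c.Y n ω, c.Z n ω)) atTop (𝓝 p)) ∧
      (∀ p : ℝ × ℝ × ℝ,
        MapClusterPt p atTop (fun n => (c.X n ω, c.Y n ω, c.Z n ω)) ↔
          (0 ≤ p.1 ∧ 0 ≤ p.2.1 ∧ 0 ≤ p.2.2 ∧ p.1 + p.2.1 + p.2.2 = 1 ∧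
            p.1 * p.2.1 * p.2.2 = M))) ∧
    (∀ a b : ℝ, 0 ≤ a → a < b → b ≤ 1/27 →
      0 < μ {ω | ∃ M ∈ Set.Ioo a b,
        Tendsto (fun n => c.X n ω * c.Y n ω * c.Z n ω) atTop (𝓝 M)}) := by
  obtain ⟨h, hlaw⟩ := affine_rps_main_general μ α γ₀ hα (by linarith) c
  exact ⟨h.mono fun ω ⟨M, hM, hω⟩ => ⟨M, Ioo_subset_Ico_self hM, hω⟩, hlaw⟩
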